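/- arXiv:1305.6765 — 14 statements merged into one kernel-verified Lean document; each statement's English description precedes it below -/
import Mathlib

section
/- Let T > 0 and b, c, p, a be real numbers. Suppose y, z, q : [0,T] → ℝ are differentiable and satisfy, for all t ∈ [0,T], the uncorrelated Stein–Stein Hamiltonian system y'(t) = z(t)²(p − 1/2), z'(t) = b·z(t) + c²·q(t), q'(t) = p·z(t)(1 − p) − b·q(t), together with the boundary conditions y(0) = z(0) = 0, y(T) = a and q(T) = 0. Then (1/2)·∫₀ᵀ (p²·z(t)² + c²·q(t)²) dt = p·a. In particular, if a > 0 then p ≥ 0. -/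
/-- Energy identity for the uncorrelated Stein–Stein Hamiltonian system:
`(1/2)∫₀ᵀ (p²z² + c²q²) dt = p·a`, and consequently `p ≥ 0` whenever `a > 0`. -/
theorem stein_stein_uncorrelated_energy_identity
    (T b c p a : ℝ) (hT : 0 < T) (y z q : ℝ → ℝ)
    (hy : ∀ t ∈ Set.Icc (0 : ℝ) T,
      HasDerivWithinAt y (z t ^ 2 * (p - 1 / 2)) (Set.Icc (0 : ℝ) T) t)
    (hz : ∀ t ∈ Set.Icc (0 : ℝ) T,
      HasDerivWithinAt z (b * z t + c ^ 2 * q t) (Set.Icc (0 : ℝ) T) t)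
    (hq : ∀ t ∈ Set.Icc (0 : ℝ) T,
      HasDerivWithinAt q (p * z t * (1 - p) - b * q t) (Set.Icc (0 : ℝ) T) t)
    (hy0 : y 0 = 0) (hz0 : z 0 = 0) (hyT : y T = a) (hqT : q T = 0) :
    (1 / 2) * (∫ t in (0 : ℝ)..T, (p ^ 2 * z t ^ 2 + c ^ 2 * q t ^ 2)) = p * a
      ∧ (0 < a → 0 ≤ p) := by
  have hI : (∫ t in (0 : ℝ)..T, (p ^ 2 * z t ^ 2 + c ^ 2 * q t ^ 2))
      = (z T * q T + 2 * p * y T) - (z 0 * q 0 + 2 * p * y 0) := by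
    have hzc : ContinuousOn z (Set.Icc 0 T) := fun t ht => (hz t ht).continuousWithinAt
    have hqc : ContinuousOn q (Set.Icc 0 T) := fun t ht => (hq t ht).continuousWithinAt
    have hyc : ContinuousOn y (Set.Icc 0 T) := fun t ht => (hy t ht).continuousWithinAt
    refine intervalIntegral.integral_eq_sub_of_hasDerivAt_of_le
      (f := fun t => z t * q t + 2 * p * y t) hT.le (by fun_prop) ?_ ?_
    · intro t ht
      have hm := Icc_mem_nhds ht.1 ht.2
      have ht' := Set.Ioo_subset_Icc_self ht
      have h := (((hz t ht').hasDerivAt hm).mul ((hq t ht').hasDerivAt hm)).add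
        (((hy t ht').hasDerivAt hm).const_mul (2 * p))
      refine h.congr_deriv ?_
      ring
    · apply ContinuousOn.intervalIntegrable
      rw [Set.uIcc_of_le hT.le]
      fun_prop
  have h1 : (1 / 2) * (∫ t in (0 : ℝ)..T, (p ^ 2 * z t ^ 2 + c ^ 2 * q t ^ 2)) = p * a := by
    rw [hI, hy0, hz0, hyT, hqT]
    ring
  refine ⟨h1, fun ha => ?_⟩
  have h2 : 0 ≤ ∫ t in (0 : ℝ)..T, (p ^ 2 * z t ^ 2 + c ^ 2 * q t ^ 2) :=
    intervalIntegral.integral_nonneg hT.le (fun t _ => by positivity)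
  have h3 : 0 ≤ p * a := by linarith
  exact nonneg_of_mul_nonneg_left h3 ha
end

section
/- Let b, c, p, q₀ be real numbers and let χ > 0 satisfy χ² = c²p(p − 1) − b². If y, z, q : ℝ → ℝ are differentiable and satisfy, for all t, y'(t) = z(t)²(p − 1/2), z'(t) = b·z(t) + c²·q(t), q'(t) = p·z(t)(1 − p) − b·q(t), with initial conditions y(0) = z(0) = 0 and q(0) = q₀, then for all t: z(t) = (q₀c²/χ)·sin(χt), q(t) = q₀·(cos(χt) − (b/χ)·sin(χt)), and y(t) = (q₀²c⁴(2p − 1)/(8χ³))·(2χt − sin(2χt)). Conversely, the functions defined by these formulas satisfy the system with these initial conditions. -/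
theorem ss_const (f : ℝ → ℝ) (h : ∀ t, HasDerivAt f 0 t) (t : ℝ) : f t = f 0 :=
  is_const_of_deriv_eq_zero (fun x => (h x).differentiableAt) (fun x => (h x).deriv) t 0

theorem ss_unique (b c p χ : ℝ) (hχ : 0 < χ) (hχ2 : χ ^ 2 = c ^ 2 * p * (p - 1) - b ^ 2)
    (u v : ℝ → ℝ) (hu : ∀ t : ℝ, HasDerivAt u (b * u t + c ^ 2 * v t) t)
    (hv : ∀ t : ℝ, HasDerivAt v (p * u t * (1 - p) - b * v t) t)
    (u0 : u 0 = 0) (v0 : v 0 = 0) (t : ℝ) : u t = 0 ∧ v t = 0 := by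
  have hc : c ≠ 0 := by
    rintro rfl
    nlinarith [sq_nonneg b, pow_pos hχ 2]
  have hE := ss_const (fun s => χ ^ 2 * (u s * u s)
      + (b * u s + c ^ 2 * v s) * (b * u s + c ^ 2 * v s)) (by
    intro s
    have hw := ((hu s).const_mul b).add ((hv s).const_mul (c ^ 2))
    have h := (((hu s).mul (hu s)).const_mul (χ ^ 2)).add (hw.mul hw)
    refine h.congr_deriv ?_
    simp only [Pi.add_apply]
    rw [hχ2]; ring) t
  simp only [u0, v0] at hE
  have h1 : 0 ≤ χ ^ 2 * (u t * u t) := by have := mul_self_nonneg (u t); positivity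
  have h2 := mul_self_nonneg (b * u t + c ^ 2 * v t)
  have h3 : χ ^ 2 * (u t * u t) = 0 := by linarith
  have h4 : (b * u t + c ^ 2 * v t) * (b * u t + c ^ 2 * v t) = 0 := by linarith
  have h5 : u t = 0 := by simpa [hχ.ne'] using h3
  refine ⟨h5, ?_⟩
  simpa [h5, hc] using h4

/-- Explicit solution of the uncorrelated Stein–Stein Hamiltonian flow started at
`(y,z,q)(0) = (0,0,q₀)`, together with the converse statement that the explicit
formulas indeed solve the system. -/
theorem stein_stein_uncorrelated_hamiltonian_flow
    (b c p q₀ χ : ℝ) (hχ : 0 < χ) (hχ2 : χ ^ 2 = c ^ 2 * p * (p - 1) - b ^ 2) :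
    ((∀ y z q : ℝ → ℝ,
      (∀ t : ℝ, HasDerivAt y (z t ^ 2 * (p - 1 / 2)) t) →
      (∀ t : ℝ, HasDerivAt z (b * z t + c ^ 2 * q t) t) →
      (∀ t : ℝ, HasDerivAt q (p * z t * (1 - p) - b * q t) t) →
      y 0 = 0 → z 0 = 0 → q 0 = q₀ →
      ∀ t : ℝ,
        z t = q₀ * c ^ 2 / χ * Real.sin (χ * t) ∧
        q t = q₀ * (Real.cos (χ * t) - b / χ * Real.sin (χ * t)) ∧
        y t = q₀ ^ 2 * c ^ 4 * (2 * p - 1) / (8 * χ ^ 3) * (2 * χ * t - Real.sin (2 * χ * t))))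
    ∧
    ((∀ t : ℝ,
      HasDerivAt (fun s : ℝ =>
          q₀ ^ 2 * c ^ 4 * (2 * p - 1) / (8 * χ ^ 3) * (2 * χ * s - Real.sin (2 * χ * s)))
        ((q₀ * c ^ 2 / χ * Real.sin (χ * t)) ^ 2 * (p - 1 / 2)) t ∧
      HasDerivAt (fun s : ℝ => q₀ * c ^ 2 / χ * Real.sin (χ * s))
        (b * (q₀ * c ^ 2 / χ * Real.sin (χ * t))
          + c ^ 2 * (q₀ * (Real.cos (χ * t) - b / χ * Real.sin (χ * t)))) t ∧
      HasDerivAt (fun s : ℝ => q₀ * (Real.cos (χ * s) - b / χ * Real.sin (χ * s)))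
        (p * (q₀ * c ^ 2 / χ * Real.sin (χ * t)) * (1 - p)
          - b * (q₀ * (Real.cos (χ * t) - b / χ * Real.sin (χ * t)))) t)
    ∧ q₀ ^ 2 * c ^ 4 * (2 * p - 1) / (8 * χ ^ 3) * (2 * χ * 0 - Real.sin (2 * χ * 0)) = 0
    ∧ q₀ * c ^ 2 / χ * Real.sin (χ * 0) = 0
    ∧ q₀ * (Real.cos (χ * 0) - b / χ * Real.sin (χ * 0)) = q₀) := by
  have hne := hχ.ne'
  have hs : ∀ k t : ℝ, HasDerivAt (fun s : ℝ => Real.sin (k * s)) (Real.cos (k * t) * k) t := by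
    intro k t
    simpa using ((hasDerivAt_id t).const_mul k).sin
  have hcos : ∀ k t : ℝ, HasDerivAt (fun s : ℝ => Real.cos (k * s)) (-Real.sin (k * t) * k) t := by
    intro k t
    simpa using ((hasDerivAt_id t).const_mul k).cos
  have hY : ∀ t : ℝ, HasDerivAt (fun s : ℝ =>
          q₀ ^ 2 * c ^ 4 * (2 * p - 1) / (8 * χ ^ 3) * (2 * χ * s - Real.sin (2 * χ * s)))
        ((q₀ * c ^ 2 / χ * Real.sin (χ * t)) ^ 2 * (p - 1 / 2)) t := by
    intro t
    have h := ((((hasDerivAt_id t).const_mul (2 * χ)).sub (hs (2 * χ) t)).const_mul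
      (q₀ ^ 2 * c ^ 4 * (2 * p - 1) / (8 * χ ^ 3)))
    refine h.congr_deriv ?_
    rw [mul_assoc 2 χ t, Real.cos_two_mul, Real.cos_sq']
    field_simp
    ring
  have hZ : ∀ t : ℝ, HasDerivAt (fun s : ℝ => q₀ * c ^ 2 / χ * Real.sin (χ * s))
        (b * (q₀ * c ^ 2 / χ * Real.sin (χ * t))
          + c ^ 2 * (q₀ * (Real.cos (χ * t) - b / χ * Real.sin (χ * t)))) t := by
    intro t
    refine ((hs χ t).const_mul (q₀ * c ^ 2 / χ)).congr_deriv ?_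
    field_simp
    ring
  have hQ : ∀ t : ℝ, HasDerivAt
        (fun s : ℝ => q₀ * (Real.cos (χ * s) - b / χ * Real.sin (χ * s)))
        (p * (q₀ * c ^ 2 / χ * Real.sin (χ * t)) * (1 - p)
          - b * (q₀ * (Real.cos (χ * t) - b / χ * Real.sin (χ * t)))) t := by
    intro t
    refine (((hcos χ t).sub ((hs χ t).const_mul (b / χ))).const_mul q₀).congr_deriv ?_
    field_simp
    linear_combination (-q₀ * Real.sin (χ * t)) * hχ2
  refine ⟨?_, fun t => ⟨hY t, hZ t, hQ t⟩, by simp, by simp, by simp⟩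
  intro y z q hy hz hq y0 z0 q0
  have key := ss_unique b c p χ hχ hχ2
    (fun s => z s - q₀ * c ^ 2 / χ * Real.sin (χ * s))
    (fun s => q s - q₀ * (Real.cos (χ * s) - b / χ * Real.sin (χ * s)))
    (fun t => ((hz t).sub (hZ t)).congr_deriv (by ring))
    (fun t => ((hq t).sub (hQ t)).congr_deriv (by ring))
    (by simp [z0]) (by simp [q0])
  have hzt : ∀ t, z t = q₀ * c ^ 2 / χ * Real.sin (χ * t) := fun t => sub_eq_zero.mp (key t).1
  intro t
  refine ⟨hzt t, sub_eq_zero.mp (key t).2, ?_⟩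
  have := ss_const (fun s => y s - q₀ ^ 2 * c ^ 4 * (2 * p - 1) / (8 * χ ^ 3)
      * (2 * χ * s - Real.sin (2 * χ * s)))
    (fun t => ((hy t).sub (hY t)).congr_deriv (by rw [hzt t]; ring)) t
  simp only [y0, mul_zero, Real.sin_zero, sub_zero] at this
  exact sub_eq_zero.mp this
end

section
/- Let T > 0, b ≤ 0, c > 0, a > 0 and p, q₀ ∈ ℝ. Differentiable functions y, z, q : [0,T] → ℝ satisfy the uncorrelated Stein–Stein Hamiltonian system y' = z²(p − 1/2), z' = bz + c²q, q' = pz(1 − p) − bq with boundary conditions y(0) = z(0) = 0, q(0) = q₀, y(T) = a and q(T) = 0 if and only if there exists r > 0 with r·cos r − bT·sin r = 0 such that p = (1/2)·(1 + √(1 + 4b²/c² + 4r²/(c²T²))), q₀² = 8r³a / (c⁴(2p − 1)T³(2r − sin(2r))), and, setting χ = r/T, the functions are given by the explicit flow formulas z(t) = (q₀c²/χ)·sin(χt), q(t) = q₀·(cos(χt) − (b/χ)·sin(χt)), y(t) = (q₀²c⁴(2p − 1)/(8χ³))·(2χt − sin(2χt)). -/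
lemma const_of_hasDerivWithin_zero {T : ℝ} {f : ℝ → ℝ}
    (h : ∀ t ∈ Set.Icc (0 : ℝ) T, HasDerivWithinAt f 0 (Set.Icc (0 : ℝ) T) t) :
    ∀ t ∈ Set.Icc (0 : ℝ) T, f t = f 0 := by
  intro t ht
  have h0 : (0 : ℝ) ∈ Set.Icc (0 : ℝ) T := ⟨le_rfl, ht.1.trans ht.2⟩
  have := (convex_Icc (0 : ℝ) T).norm_image_sub_le_of_norm_hasDerivWithin_le
    (f := f) (f' := fun _ => 0) (C := 0) h (by simp) h0 ht
  simpa [sub_eq_zero] using this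

/-- Solutions of the linear `(z, q)` system in terms of a fundamental solution. -/
lemma linear_flow {T b c p q₀ k : ℝ} {z q S C : ℝ → ℝ}
    (hk : k = c ^ 2 * p * (p - 1) - b ^ 2)
    (hz : ∀ t ∈ Set.Icc (0 : ℝ) T,
        HasDerivWithinAt z (b * z t + c ^ 2 * q t) (Set.Icc (0 : ℝ) T) t)
    (hq : ∀ t ∈ Set.Icc (0 : ℝ) T,
        HasDerivWithinAt q (p * z t * (1 - p) - b * q t) (Set.Icc (0 : ℝ) T) t)
    (hz0 : z 0 = 0) (hq0 : q 0 = q₀)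
    (hS : ∀ t, HasDerivAt S (C t) t) (hC : ∀ t, HasDerivAt C (-k * S t) t)
    (hS0 : S 0 = 0) (hC0 : C 0 = 1) :
    ∀ t ∈ Set.Icc (0 : ℝ) T, z t = c ^ 2 * q₀ * S t ∧
      b * z t + c ^ 2 * q t = c ^ 2 * q₀ * C t := by
  intro t ht
  have e1 := const_of_hasDerivWithin_zero (T := T) (f := fun t => C t * C t + k * (S t * S t))
    (fun t _ => by
      have h1 := (hC t).hasDerivWithinAt (s := Set.Icc (0 : ℝ) T)
      have h2 := (hS t).hasDerivWithinAt (s := Set.Icc (0 : ℝ) T)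
      refine ((h1.mul h1).add ((h2.mul h2).const_mul k)).congr_deriv ?_
      ring) t ht
  have e2 := const_of_hasDerivWithin_zero (T := T)
    (f := fun t => z t * C t - (b * z t + c ^ 2 * q t) * S t)
    (fun t ht => by
      have h1 := (hC t).hasDerivWithinAt (s := Set.Icc (0 : ℝ) T)
      have h2 := (hS t).hasDerivWithinAt (s := Set.Icc (0 : ℝ) T)
      refine (((hz t ht).mul h1).sub
        ((((hz t ht).const_mul b).add ((hq t ht).const_mul (c ^ 2))).mul h2)).congr_deriv ?_
      simp only [Pi.add_apply]
      rw [hk]; ring) t ht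
  have e3 := const_of_hasDerivWithin_zero (T := T)
    (f := fun t => k * (z t * S t) + (b * z t + c ^ 2 * q t) * C t)
    (fun t ht => by
      have h1 := (hC t).hasDerivWithinAt (s := Set.Icc (0 : ℝ) T)
      have h2 := (hS t).hasDerivWithinAt (s := Set.Icc (0 : ℝ) T)
      refine ((((hz t ht).mul h2).const_mul k).add
        ((((hz t ht).const_mul b).add ((hq t ht).const_mul (c ^ 2))).mul h1)).congr_deriv ?_
      simp only [Pi.add_apply]
      rw [hk]; ring) t ht
  simp only [hS0, hC0, hz0, hq0] at e1 e2 e3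
  constructor
  · linear_combination (-z t) * e1 + C t * e2 + S t * e3
  · linear_combination (-(b * z t + c ^ 2 * q t)) * e1 - k * S t * e2 + C t * e3

/-- Derivative of the explicit `y`. -/
lemma y_deriv (A x t : ℝ) :
    HasDerivAt (fun t => A * (2 * x * t - Real.sin (2 * x * t)))
      (A * (4 * x * Real.sin (x * t) ^ 2)) t := by
  have h : HasDerivAt (fun t : ℝ => 2 * x * t) (2 * x) t := by
    simpa using (hasDerivAt_id t).const_mul (2 * x)
  refine ((h.sub h.sin).const_mul A).congr_deriv ?_
  have : Real.cos (2 * x * t) = 1 - 2 * Real.sin (x * t) ^ 2 := by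
    rw [mul_assoc, Real.cos_two_mul, Real.cos_sq']; ring
  rw [this]; ring

/-- Characterization of all solutions of the uncorrelated Stein–Stein Hamiltonian
boundary value problem `(y,z)(0) = (0,0)`, `q(0) = q₀`, `y(T) = a`, `q(T) = 0`
in terms of the positive roots of `r·cos r − bT·sin r = 0`. -/
theorem stein_stein_uncorrelated_bvp_characterization
    (T b c a p q₀ : ℝ) (hT : 0 < T) (hb : b ≤ 0) (hc : 0 < c) (ha : 0 < a)
    (y z q : ℝ → ℝ) :
    ((∀ t ∈ Set.Icc (0 : ℝ) T,
        HasDerivWithinAt y (z t ^ 2 * (p - 1 / 2)) (Set.Icc (0 : ℝ) T) t) ∧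
      (∀ t ∈ Set.Icc (0 : ℝ) T,
        HasDerivWithinAt z (b * z t + c ^ 2 * q t) (Set.Icc (0 : ℝ) T) t) ∧
      (∀ t ∈ Set.Icc (0 : ℝ) T,
        HasDerivWithinAt q (p * z t * (1 - p) - b * q t) (Set.Icc (0 : ℝ) T) t) ∧
      y 0 = 0 ∧ z 0 = 0 ∧ q 0 = q₀ ∧ y T = a ∧ q T = 0)
    ↔
    (∃ r : ℝ, 0 < r ∧ r * Real.cos r - b * T * Real.sin r = 0 ∧
      p = (1 / 2) * (1 + Real.sqrt (1 + 4 * b ^ 2 / c ^ 2 + 4 * r ^ 2 / (c ^ 2 * T ^ 2))) ∧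
      q₀ ^ 2 = 8 * r ^ 3 * a / (c ^ 4 * (2 * p - 1) * T ^ 3 * (2 * r - Real.sin (2 * r))) ∧
      (∀ t ∈ Set.Icc (0 : ℝ) T,
        z t = q₀ * c ^ 2 / (r / T) * Real.sin ((r / T) * t) ∧
        q t = q₀ * (Real.cos ((r / T) * t) - b / (r / T) * Real.sin ((r / T) * t)) ∧
        y t = q₀ ^ 2 * c ^ 4 * (2 * p - 1) / (8 * (r / T) ^ 3)
            * (2 * (r / T) * t - Real.sin (2 * (r / T) * t)))) := by
  have lin : ∀ x t : ℝ, HasDerivAt (fun t : ℝ => x * t) x t := fun x t => by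
    simpa using (hasDerivAt_id t).const_mul x
  have hT0 : (0 : ℝ) ∈ Set.Icc (0 : ℝ) T := ⟨le_rfl, hT.le⟩
  have hTT : T ∈ Set.Icc (0 : ℝ) T := ⟨hT.le, le_rfl⟩
  have hsin : ∀ r : ℝ, 0 < r → 0 < 2 * r - Real.sin (2 * r) := fun r hr => by
    have := Real.sin_lt (x := 2 * r) (by linarith)
    linarith
  constructor
  · rintro ⟨hy, hz, hq, hy0, hz0, hq0, hyT, hqT⟩
    obtain ⟨k, hk⟩ : ∃ k, k = c ^ 2 * p * (p - 1) - b ^ 2 := ⟨_, rfl⟩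
    have hq0ne : (∃ S : ℝ → ℝ, ∀ t ∈ Set.Icc (0 : ℝ) T, z t = c ^ 2 * q₀ * S t) → q₀ ≠ 0 := by
      rintro ⟨S, hS⟩ h0
      have := const_of_hasDerivWithin_zero (T := T) (f := y) (fun t ht => by
        have := hy t ht
        rw [hS t ht, h0] at this
        simpa using this) T hTT
      rw [hyT, hy0] at this
      exact ha.ne' this
    have hcon : ∀ S C : ℝ → ℝ, (∀ t, HasDerivAt S (C t) t) → (∀ t, HasDerivAt C (-k * S t) t) →
        S 0 = 0 → C 0 = 1 → C T - b * S T = 0 := by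
      intro S C hS hC hS0 hC0
      have hf := linear_flow hk hz hq hz0 hq0 hS hC hS0 hC0
      have hne := hq0ne ⟨S, fun t ht => (hf t ht).1⟩
      obtain ⟨h1, h2⟩ := hf T hTT
      rw [hqT, h1] at h2
      have : c ^ 2 * q₀ * (C T - b * S T) = 0 := by linarith
      rcases mul_eq_zero.1 this with h | h
      · exact absurd h (by positivity)
      · exact h
    have hkpos : 0 < k := by
      by_contra hneg
      rcases (not_lt.1 hneg).eq_or_lt with h | h
      · have := hcon (fun t => t) (fun _ => 1) (fun t => hasDerivAt_id t)
          (fun t => by simpa [h] using hasDerivAt_const t (1 : ℝ)) rfl rfl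
        nlinarith
      · obtain ⟨w, hw, hkw⟩ : ∃ w : ℝ, 0 < w ∧ k = -w ^ 2 :=
          ⟨√(-k), Real.sqrt_pos.2 (by linarith), by rw [Real.sq_sqrt (by linarith)]; ring⟩
        have := hcon (fun t => Real.sinh (w * t) / w) (fun t => Real.cosh (w * t))
          (fun t => ((lin w t).sinh.div_const w).congr_deriv (by field_simp))
          (fun t => (lin w t).cosh.congr_deriv (by rw [hkw]; field_simp)) (by simp) (by simp)
        have h1 := Real.cosh_pos (w * T)
        have h2 : 0 < Real.sinh (w * T) / w :=
          div_pos (Real.sinh_pos_iff.2 (by positivity)) hw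
        nlinarith
    obtain ⟨x, hx, hkx⟩ : ∃ x : ℝ, 0 < x ∧ k = x ^ 2 :=
      ⟨√k, Real.sqrt_pos.2 hkpos, by rw [Real.sq_sqrt hkpos.le]⟩
    have hS : ∀ t, HasDerivAt (fun t => Real.sin (x * t) / x) (Real.cos (x * t)) t :=
      fun t => ((lin x t).sin.div_const x).congr_deriv (by field_simp)
    have hC : ∀ t, HasDerivAt (fun t => Real.cos (x * t)) (-k * (Real.sin (x * t) / x)) t :=
      fun t => (lin x t).cos.congr_deriv (by rw [hkx]; field_simp)
    have hf := linear_flow hk hz hq hz0 hq0 hS hC (by simp) (by simp)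
    have hroot := hcon _ _ hS hC (by simp) (by simp)
    have hyf : ∀ t ∈ Set.Icc (0 : ℝ) T, y t = q₀ ^ 2 * c ^ 4 * (2 * p - 1) / (8 * x ^ 3)
            * (2 * x * t - Real.sin (2 * x * t)) := by
      intro t ht
      have := const_of_hasDerivWithin_zero (T := T)
        (f := fun t => y t - q₀ ^ 2 * c ^ 4 * (2 * p - 1) / (8 * x ^ 3)
            * (2 * x * t - Real.sin (2 * x * t))) (fun t ht => by
          refine ((hy t ht).sub (y_deriv _ x t).hasDerivWithinAt).congr_deriv ?_
          rw [(hf t ht).1]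
          field_simp
          ring) t ht
      simp [hy0] at this
      linarith
    have hrx : x * T / T = x := by field_simp
    have hxT : 0 < x * T := by positivity
    have hs := hsin _ hxT
    have ha' := hyf T hTT
    rw [hyT, mul_assoc 2 x T] at ha'
    have hp : 0 < 2 * p - 1 := by
      by_contra hn
      have : q₀ ^ 2 * c ^ 4 * (2 * p - 1) / (8 * x ^ 3) ≤ 0 :=
        div_nonpos_of_nonpos_of_nonneg
          (mul_nonpos_of_nonneg_of_nonpos (by positivity) (not_lt.1 hn)) (by positivity)
      nlinarith
    refine ⟨x * T, hxT, ?_, ?_, ?_, ?_⟩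
    · field_simp at hroot
      linear_combination T * hroot
    · have : 1 + 4 * b ^ 2 / c ^ 2 + 4 * (x * T) ^ 2 / (c ^ 2 * T ^ 2) = (2 * p - 1) ^ 2 := by
        rw [hkx] at hk
        field_simp
        linear_combination 4 * hk
      rw [this, Real.sqrt_sq hp.le]; ring
    · rw [eq_div_iff (by positivity), ha']
      field_simp
    · rw [hrx]
      intro t ht
      obtain ⟨h1, h2⟩ := hf t ht
      refine ⟨by rw [h1]; ring, ?_, hyf t ht⟩
      have hc2 : c ^ 2 ≠ 0 := by positivity
      apply mul_left_cancel₀ hc2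
      rw [h1] at h2
      linear_combination h2
  · rintro ⟨r, hr, hroot, hp, hq2, hf⟩
    obtain ⟨x, hxd⟩ : ∃ x, x = r / T := ⟨_, rfl⟩
    have hx : 0 < x := by rw [hxd]; positivity
    have hrx : r = x * T := by rw [hxd]; field_simp
    rw [← hxd] at hf
    subst hrx
    have hs := hsin _ hr
    have hR : 0 < 1 + 4 * b ^ 2 / c ^ 2 + 4 * (x * T) ^ 2 / (c ^ 2 * T ^ 2) := by positivity
    have hp1 : 2 * p - 1 = √(1 + 4 * b ^ 2 / c ^ 2 + 4 * (x * T) ^ 2 / (c ^ 2 * T ^ 2)) := by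
      linarith
    have hppos : 0 < 2 * p - 1 := by rw [hp1]; exact Real.sqrt_pos.2 hR
    have hpp : x ^ 2 + b ^ 2 = c ^ 2 * p * (p - 1) := by
      have h := Real.sq_sqrt hR.le
      rw [← hp1] at h
      field_simp at h
      linear_combination (-1 / 4) * h
    clear hp hp1
    refine ⟨?_, ?_, ?_, ?_, ?_, ?_, ?_, ?_⟩
    · intro t ht
      refine HasDerivWithinAt.congr_of_mem ?_ (fun s hs => (hf s hs).2.2) ht
      refine (y_deriv _ x t).hasDerivWithinAt.congr_deriv ?_
      rw [(hf t ht).1]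
      field_simp
      ring
    · intro t ht
      refine HasDerivWithinAt.congr_of_mem ?_ (fun s hs => (hf s hs).1) ht
      refine ((lin x t).sin.const_mul _).hasDerivWithinAt.congr_deriv ?_
      rw [(hf t ht).1, (hf t ht).2.1]
      field_simp
      ring
    · intro t ht
      refine HasDerivWithinAt.congr_of_mem ?_ (fun s hs => (hf s hs).2.1) ht
      refine (((lin x t).cos.sub ((lin x t).sin.const_mul _)).const_mul _).hasDerivWithinAt.congr_deriv ?_
      rw [(hf t ht).1, (hf t ht).2.1]
      field_simp
      linear_combination (-q₀ * Real.sin (x * t)) * hpp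
    · rw [(hf 0 hT0).2.2]; simp
    · rw [(hf 0 hT0).1]; simp
    · rw [(hf 0 hT0).2.1]; simp
    · rw [(hf T hTT).2.2, mul_assoc 2 x T, hq2]
      generalize 2 * (x * T) - Real.sin (2 * (x * T)) = D at hs
      field_simp
    · rw [(hf T hTT).2.1]
      have : Real.cos (x * T) - b / x * Real.sin (x * T) = 0 := by
        have h : T * (x * Real.cos (x * T) - b * Real.sin (x * T)) = 0 := by linarith
        have h' := (mul_eq_zero.1 h).resolve_left hT.ne'
        field_simp
        linarith
      rw [this, mul_zero]
end

section
/- Let T > 0 and b, c, p, a, ρ be real numbers, and set b̃ = b + ρcp. Suppose y, z, q : [0,T] → ℝ are differentiable and satisfy, for all t ∈ [0,T], the correlated Stein–Stein Hamiltonian system y' = z²(p − 1/2) + ρczq, z' = b̃z + c²q, q' = pz(1 − p) − b̃q, with y(0) = z(0) = 0, y(T) = a and q(T) = 0. Then (1/2)·∫₀ᵀ (p²·z(t)² + 2ρcp·z(t)·q(t) + c²·q(t)²) dt = p·a. In particular, if a > 0 and |ρ| ≤ 1 then p ≥ 0. -/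
/-- Energy identity for the correlated Stein–Stein Hamiltonian system:
`(1/2)∫₀ᵀ (p²z² + 2ρcp·zq + c²q²) dt = p·a`, and consequently `p ≥ 0`
whenever `a > 0` and `|ρ| ≤ 1`. -/
theorem stein_stein_correlated_energy_identity
    (T b c p a ρ : ℝ) (hT : 0 < T) (y z q : ℝ → ℝ)
    (hy : ∀ t ∈ Set.Icc (0 : ℝ) T,
      HasDerivWithinAt y (z t ^ 2 * (p - 1 / 2) + ρ * c * z t * q t) (Set.Icc (0 : ℝ) T) t)
    (hz : ∀ t ∈ Set.Icc (0 : ℝ) T,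
      HasDerivWithinAt z ((b + ρ * c * p) * z t + c ^ 2 * q t) (Set.Icc (0 : ℝ) T) t)
    (hq : ∀ t ∈ Set.Icc (0 : ℝ) T,
      HasDerivWithinAt q (p * z t * (1 - p) - (b + ρ * c * p) * q t) (Set.Icc (0 : ℝ) T) t)
    (hy0 : y 0 = 0) (hz0 : z 0 = 0) (hyT : y T = a) (hqT : q T = 0) :
    (1 / 2) * (∫ t in (0 : ℝ)..T,
        (p ^ 2 * z t ^ 2 + 2 * ρ * c * p * z t * q t + c ^ 2 * q t ^ 2)) = p * a
      ∧ (0 < a → |ρ| ≤ 1 → 0 ≤ p) := by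
  have hyc : ContinuousOn y (Set.Icc 0 T) := fun t ht => (hy t ht).continuousWithinAt
  have hzc : ContinuousOn z (Set.Icc 0 T) := fun t ht => (hz t ht).continuousWithinAt
  have hqc : ContinuousOn q (Set.Icc 0 T) := fun t ht => (hq t ht).continuousWithinAt
  have hI : (∫ t in (0 : ℝ)..T,
        (p ^ 2 * z t ^ 2 + 2 * ρ * c * p * z t * q t + c ^ 2 * q t ^ 2))
      = (2 * p * y T + z T * q T) - (2 * p * y 0 + z 0 * q 0) := by
    refine intervalIntegral.integral_eq_sub_of_hasDerivAt_of_le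
      (f := fun t => 2 * p * y t + z t * q t) hT.le (by fun_prop) ?_ ?_
    · intro t ht
      have hm := Set.Ioo_subset_Icc_self ht
      have hn : Set.Icc 0 T ∈ nhds t := Icc_mem_nhds ht.1 ht.2
      have h1 := ((hy t hm).hasDerivAt hn).const_mul (2 * p)
      have h2 := ((hz t hm).hasDerivAt hn).mul ((hq t hm).hasDerivAt hn)
      refine (h1.add h2).congr_deriv ?_
      ring
    · apply ContinuousOn.intervalIntegrable
      rw [Set.uIcc_of_le hT.le]
      fun_prop
  have hE : (1 / 2) * (∫ t in (0 : ℝ)..T,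
        (p ^ 2 * z t ^ 2 + 2 * ρ * c * p * z t * q t + c ^ 2 * q t ^ 2)) = p * a := by
    rw [hI, hy0, hz0, hyT, hqT]
    ring
  refine ⟨hE, fun ha hρ => ?_⟩
  have hnn : 0 ≤ ∫ t in (0 : ℝ)..T,
        (p ^ 2 * z t ^ 2 + 2 * ρ * c * p * z t * q t + c ^ 2 * q t ^ 2) := by
    refine intervalIntegral.integral_nonneg hT.le fun t _ => ?_
    have h1 : 0 ≤ 1 - ρ ^ 2 := by
      have := (sq_le_one_iff_abs_le_one ρ).2 hρ
      linarith
    have h2 : p ^ 2 * z t ^ 2 + 2 * ρ * c * p * z t * q t + c ^ 2 * q t ^ 2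
        = (1 - ρ ^ 2) * (p * z t) ^ 2 + (ρ * p * z t + c * q t) ^ 2 := by ring
    rw [h2]
    positivity
  have hpa : 0 ≤ p * a := by linarith
  exact nonneg_of_mul_nonneg_left hpa ha
end

section
/- Let β ≤ 0. Then the equation r·cos r = β·sin r has exactly one solution r₁ in the interval (0, π); moreover r₁ ∈ [π/2, π), r₁ = π/2 if and only if β = 0, and r₁ is the smallest strictly positive solution of the equation r·cos r = β·sin r. -/
lemma root_ge (β : ℝ) (hβ : β ≤ 0) (r : ℝ) (h0 : 0 < r) (h1 : r < Real.pi)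
    (h : r * Real.cos r = β * Real.sin r) : Real.pi / 2 ≤ r := by
  by_contra hc
  push Not at hc
  have hs := Real.sin_pos_of_pos_of_lt_pi h0 h1
  have hcos := Real.cos_pos_of_mem_Ioo ⟨by linarith, hc⟩
  have := mul_pos h0 hcos
  have := mul_nonneg (neg_nonneg.2 hβ) hs.le
  linarith

lemma root_not_lt (β : ℝ) (hβ : β ≤ 0) (r s : ℝ) (h0 : 0 < r) (hrs : r < s) (h1 : s < Real.pi)
    (hr : r * Real.cos r = β * Real.sin r) (hs : s * Real.cos s = β * Real.sin s) : False := by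
  have hs2 := root_ge β hβ s (h0.trans hrs) h1 hs
  have hsin := Real.sin_pos_of_pos_of_lt_pi h0 (hrs.trans h1)
  have hcos : Real.cos s ≤ 0 := Real.cos_nonpos_of_pi_div_two_le_of_le hs2 (by linarith)
  have hd : 0 < Real.sin (s - r) := Real.sin_pos_of_pos_of_lt_pi (by linarith) (by linarith)
  rw [Real.sin_sub] at hd
  have h2 := mul_pos h0 hd
  have h3 := mul_nonneg (mul_nonneg (sub_nonneg.2 hrs.le) (neg_nonneg.2 hcos)) hsin.le
  have h4 : r * (Real.sin s * Real.cos r - Real.cos s * Real.sin r)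
      = (s - r) * Real.cos s * Real.sin r := by
    linear_combination Real.sin s * hr - Real.sin r * hs
  linarith

/-- For `β ≤ 0`, the equation `r·cos r = β·sin r` has a unique solution `r₁` in `(0, π)`;
moreover `r₁ ∈ [π/2, π)`, `r₁ = π/2` iff `β = 0`, and `r₁` is the smallest strictly
positive solution. -/
theorem transversality_equation_first_root (β : ℝ) (hβ : β ≤ 0) :
    ∃ r₁ : ℝ, r₁ ∈ Set.Ioo 0 Real.pi ∧ r₁ * Real.cos r₁ = β * Real.sin r₁ ∧
      (∀ r ∈ Set.Ioo 0 Real.pi, r * Real.cos r = β * Real.sin r → r = r₁) ∧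
      r₁ ∈ Set.Ico (Real.pi / 2) Real.pi ∧
      (r₁ = Real.pi / 2 ↔ β = 0) ∧
      (∀ r : ℝ, 0 < r → r * Real.cos r = β * Real.sin r → r₁ ≤ r) := by
  have hpi := Real.pi_pos
  have hcont : ContinuousOn (fun r : ℝ => r * Real.cos r - β * Real.sin r)
      (Set.Icc (Real.pi / 2) Real.pi) := by fun_prop
  obtain ⟨x, ⟨hx1, hx2⟩, hx⟩ := intermediate_value_Icc' (by linarith) hcont
    (show (0 : ℝ) ∈ Set.Icc _ _ from ⟨by simp; linarith, by simp; linarith⟩)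
  have hx : x * Real.cos x = β * Real.sin x := sub_eq_zero.1 hx
  have hlt : x < Real.pi := by
    rcases hx2.lt_or_eq with h | h
    · exact h
    · subst h
      simp at hx
  have h0 : 0 < x := by linarith
  have huniq : ∀ r ∈ Set.Ioo 0 Real.pi, r * Real.cos r = β * Real.sin r → r = x := by
    rintro r ⟨hr0, hr1⟩ hr
    rcases lt_trichotomy r x with h | h | h
    · exact (root_not_lt β hβ r x hr0 h hlt hr hx).elim
    · exact h
    · exact (root_not_lt β hβ x r h0 h hr1 hx hr).elim
  refine ⟨x, ⟨h0, hlt⟩, hx, huniq, ⟨hx1, hlt⟩, ⟨?_, ?_⟩, ?_⟩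
  · intro h
    rw [h] at hx
    simpa using hx.symm
  · intro h
    exact (huniq (Real.pi / 2) ⟨by linarith, by linarith⟩ (by simp [h])).symm
  · intro r hr0 hr
    rcases lt_or_ge r Real.pi with h | h
    · exact (huniq r ⟨hr0, h⟩ hr).ge
    · linarith
end

section
/- Let T > 0, b ≤ 0, c > 0 and a > 0. Let r₁ be the smallest strictly positive solution of r·cos r = bT·sin r and set p₁⁺ = (1/2)·(1 + √(1 + 4b²/c² + 4r₁²/(c²T²))). Consider all pairs consisting of a continuously differentiable control h = (h¹, h²) : [0,T] → ℝ² with h(0) = 0 and differentiable functions y, z : [0,T] → ℝ satisfying the controlled ODE y'(t) = −z(t)²/2 + z(t)·(h¹)'(t), z'(t) = b·z(t) + c·(h²)'(t), with y(0) = z(0) = 0 and y(T) = a. Then the infimum of the energy (1/2)·∫₀ᵀ (((h¹)'(t))² + ((h²)'(t))²) dt over all such pairs equals p₁⁺·a, and this infimum is attained. -/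
/-- The smallest positive root lies in `(0, π)`. -/
lemma root_lt_pi (T b r₁ : ℝ) (hT : 0 < T) (hb : b ≤ 0)
    (hmin : ∀ r : ℝ, 0 < r → r * Real.cos r = b * T * Real.sin r → r₁ ≤ r) : r₁ < Real.pi := by
  have hpi := Real.pi_pos
  have hcont : ContinuousOn (fun r : ℝ => r * Real.cos r - b * T * Real.sin r)
      (Set.Icc (Real.pi / 2) Real.pi) := by fun_prop
  have hiv := intermediate_value_Icc' (by linarith : Real.pi / 2 ≤ Real.pi) hcont
  have h0 : (0 : ℝ) ∈ (fun r : ℝ => r * Real.cos r - b * T * Real.sin r) ''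
      Set.Icc (Real.pi / 2) Real.pi := by
    apply hiv
    constructor
    · simp; linarith
    · simp; exact mul_nonpos_of_nonpos_of_nonneg hb hT.le
  obtain ⟨r, ⟨hr1, hr2⟩, hr⟩ := h0
  have hne : r ≠ Real.pi := by
    rintro rfl
    simp at hr
  have := hmin r (by linarith) (by simp only at hr; linarith)
  exact lt_of_le_of_lt this (lt_of_le_of_ne hr2 hne)

/-- Continuity at `0` of `cot (w t) z(t)^2`. -/
lemma cont_zero (T w : ℝ) (hw : 0 < w) (z : ℝ → ℝ) (z' : ℝ) (hz0 : z 0 = 0)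
    (hz : HasDerivWithinAt z z' (Set.Icc 0 T) 0) :
    ContinuousWithinAt (fun t => Real.cos (w * t) / Real.sin (w * t) * z t ^ 2) (Set.Icc 0 T) 0 := by
  have hcz := hz.continuousWithinAt
  have hs : HasDerivWithinAt (fun t => Real.sin (w * t)) w (Set.Icc 0 T) 0 := by
    have h1 : HasDerivAt (fun t : ℝ => w * t) w 0 := by
      simpa using (hasDerivAt_id (0 : ℝ)).const_mul w
    have := h1.sin
    simpa using this.hasDerivWithinAt
  rw [hasDerivWithinAt_iff_tendsto_slope] at hz hs
  rw [← continuousWithinAt_sdiff_self]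
  unfold ContinuousWithinAt at *
  have hcz' := hcz.mono_left (nhdsWithin_mono (0 : ℝ) (Set.sdiff_subset (s := Set.Icc 0 T) (t := {0})))
  have hcos : Filter.Tendsto (fun t : ℝ => Real.cos (w * t)) (nhdsWithin 0 (Set.Icc 0 T \ {0}))
      (nhds (Real.cos (w * 0))) :=
    (by fun_prop : Continuous fun t : ℝ => Real.cos (w * t)).continuousAt.continuousWithinAt
  have hall := (hcos.mul ((hz.div hs hw.ne').mul hcz'))
  have e : Real.cos (w * 0) / Real.sin (w * 0) * z 0 ^ 2
      = Real.cos (w * 0) * (z' / w * z 0) := by simp [hz0]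
  change Filter.Tendsto _ _ (nhds (Real.cos (w * 0) / Real.sin (w * 0) * z 0 ^ 2))
  rw [e]
  refine hall.congr' ?_
  filter_upwards [self_mem_nhdsWithin] with t ht
  have ht0 : t ≠ 0 := fun h => ht.2 (by simp [h])
  simp only [slope_def_field, Pi.div_apply, hz0, mul_zero, Real.sin_zero, sub_zero]
  rw [div_div_div_cancel_right₀ ht0]
  ring

/-- The minimal energy `Λ(a)` of controls steering the small-noise uncorrelated
Stein–Stein system from `(0,0)` to `y(T) = a` equals `p₁⁺·a`,
and the infimum is attained (`IsLeast`). -/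
theorem stein_stein_uncorrelated_energy_value
    (T b c a : ℝ) (hT : 0 < T) (hb : b ≤ 0) (hc : 0 < c) (ha : 0 < a)
    (r₁ : ℝ) (hr₁ : 0 < r₁)
    (hroot : r₁ * Real.cos r₁ = b * T * Real.sin r₁)
    (hmin : ∀ r : ℝ, 0 < r → r * Real.cos r = b * T * Real.sin r → r₁ ≤ r) :
    IsLeast
      {E : ℝ | ∃ h₁ h₂ h₁d h₂d y z : ℝ → ℝ,
        ContinuousOn h₁d (Set.Icc (0 : ℝ) T) ∧ ContinuousOn h₂d (Set.Icc (0 : ℝ) T) ∧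
        (∀ t ∈ Set.Icc (0 : ℝ) T, HasDerivWithinAt h₁ (h₁d t) (Set.Icc (0 : ℝ) T) t) ∧
        (∀ t ∈ Set.Icc (0 : ℝ) T, HasDerivWithinAt h₂ (h₂d t) (Set.Icc (0 : ℝ) T) t) ∧
        h₁ 0 = 0 ∧ h₂ 0 = 0 ∧
        (∀ t ∈ Set.Icc (0 : ℝ) T,
          HasDerivWithinAt y (-(z t ^ 2) / 2 + z t * h₁d t) (Set.Icc (0 : ℝ) T) t) ∧
        (∀ t ∈ Set.Icc (0 : ℝ) T,
          HasDerivWithinAt z (b * z t + c * h₂d t) (Set.Icc (0 : ℝ) T) t) ∧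
        y 0 = 0 ∧ z 0 = 0 ∧ y T = a ∧
        E = (1 / 2) * ∫ t in (0 : ℝ)..T, (h₁d t ^ 2 + h₂d t ^ 2)}
      ((1 / 2) * (1 + Real.sqrt (1 + 4 * b ^ 2 / c ^ 2 + 4 * r₁ ^ 2 / (c ^ 2 * T ^ 2))) * a) := by
  have hpi := root_lt_pi T b r₁ hT hb hmin
  obtain ⟨w, hw⟩ : ∃ w, w = r₁ / T := ⟨_, rfl⟩
  have hwpos : 0 < w := by rw [hw]; positivity
  have hwT : w * T = r₁ := by rw [hw]; field_simp
  have hsin : 0 < Real.sin r₁ := Real.sin_pos_of_pos_of_lt_pi hr₁ hpi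
  have hroot' : w * Real.cos r₁ = b * Real.sin r₁ := by
    have : T * (w * Real.cos r₁) = T * (b * Real.sin r₁) := by
      rw [← hwT] at hroot ⊢; linarith
    exact mul_left_cancel₀ hT.ne' this
  obtain ⟨p, hp⟩ : ∃ p, p = (1 / 2) * (1 + Real.sqrt (1 + 4 * b ^ 2 / c ^ 2
    + 4 * r₁ ^ 2 / (c ^ 2 * T ^ 2))) := ⟨_, rfl⟩
  rw [← hp]
  have hpp : c ^ 2 * (p ^ 2 - p) = b ^ 2 + w ^ 2 := by
    have hs := Real.sq_sqrt (show 0 ≤ 1 + 4 * b ^ 2 / c ^ 2 + 4 * r₁ ^ 2 / (c ^ 2 * T ^ 2) by positivity)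
    have h1 : p ^ 2 - p = (Real.sqrt (1 + 4 * b ^ 2 / c ^ 2
      + 4 * r₁ ^ 2 / (c ^ 2 * T ^ 2)) ^ 2 - 1) / 4 := by rw [hp]; ring
    rw [h1, hs, ← hwT]
    field_simp
    ring
  have hp1 : 1 / 2 ≤ p := by
    have := Real.sqrt_nonneg (1 + 4 * b ^ 2 / c ^ 2 + 4 * r₁ ^ 2 / (c ^ 2 * T ^ 2))
    rw [hp]; linarith
  have hp2 : 0 < p - 1 / 2 := by
    rcases hp1.eq_or_lt with h | h
    · exfalso
      rw [← h] at hpp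
      nlinarith [sq_nonneg b, sq_nonneg w, pow_pos hc 2]
    · linarith
  have dlin : ∀ t : ℝ, HasDerivAt (fun t : ℝ => w * t) w t := fun t => by
    simpa using (hasDerivAt_id t).const_mul w
  have dsin : ∀ t : ℝ, HasDerivAt (fun t : ℝ => Real.sin (w * t)) (Real.cos (w * t) * w) t :=
    fun t => (dlin t).sin
  have dcos : ∀ t : ℝ, HasDerivAt (fun t : ℝ => Real.cos (w * t)) (-Real.sin (w * t) * w) t :=
    fun t => (dlin t).cos
  constructor
  · -- attainment
    have hcs : Real.sin r₁ * Real.cos r₁ ≤ 0 := by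
      have : w * (Real.sin r₁ * Real.cos r₁) = b * Real.sin r₁ ^ 2 := by
        linear_combination Real.sin r₁ * hroot'
      have h2 : b * Real.sin r₁ ^ 2 ≤ 0 := mul_nonpos_of_nonpos_of_nonneg hb (sq_nonneg _)
      by_contra hcon
      push Not at hcon
      have := mul_pos hwpos hcon
      linarith
    obtain ⟨S, hS⟩ : ∃ S, S = T / 2 - Real.sin r₁ * Real.cos r₁ / (2 * w) := ⟨_, rfl⟩
    have hSpos : 0 < S := by
      have : Real.sin r₁ * Real.cos r₁ / (2 * w) ≤ 0 :=
        div_nonpos_of_nonpos_of_nonneg hcs (by positivity)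
      rw [hS]; linarith
    obtain ⟨A, hA⟩ : ∃ A, A = Real.sqrt (a / ((p - 1 / 2) * S)) := ⟨_, rfl⟩
    have hA2 : (p - 1 / 2) * A ^ 2 * S = a := by
      rw [hA, Real.sq_sqrt (by positivity), mul_right_comm,
        mul_div_cancel₀ a (mul_pos hp2 hSpos).ne']
    have dy : ∀ t : ℝ, HasDerivAt
        (fun t => (p - 1 / 2) * A ^ 2 * (t / 2 - Real.sin (w * t) * Real.cos (w * t) / (2 * w)))
        ((p - 1 / 2) * (A * Real.sin (w * t)) ^ 2) t := fun t => by
      have := (((hasDerivAt_id t).div_const 2).sub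
        (((dsin t).mul (dcos t)).div_const (2 * w))).const_mul ((p - 1 / 2) * A ^ 2)
      refine this.congr_deriv ?_
      have hcs := Real.cos_sq_add_sin_sq (w * t)
      field_simp
      linear_combination (-(p * 2 - 1) * A ^ 2) * hcs
    refine ⟨fun t => p * A * ((1 - Real.cos (w * t)) / w),
      fun t => (A * Real.sin (w * t) - b * A * ((1 - Real.cos (w * t)) / w)) / c,
      fun t => p * (A * Real.sin (w * t)),
      fun t => (A * (Real.cos (w * t) * w) - b * (A * Real.sin (w * t))) / c,
      fun t => (p - 1 / 2) * A ^ 2 * (t / 2 - Real.sin (w * t) * Real.cos (w * t) / (2 * w)),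
      fun t => A * Real.sin (w * t), by fun_prop, by fun_prop, ?_, ?_, by simp, by simp,
      ?_, ?_, by simp, by simp, ?_, ?_⟩
    · intro t _
      refine HasDerivAt.hasDerivWithinAt ?_
      refine ((((dcos t).const_sub 1).div_const w).const_mul (p * A)).congr_deriv ?_
      field_simp
    · intro t _
      refine HasDerivAt.hasDerivWithinAt ?_
      refine ((((dsin t).const_mul A).sub
        ((((dcos t).const_sub 1).div_const w).const_mul (b * A))).div_const c).congr_deriv ?_
      field_simp
    · intro t _
      refine ((dy t).congr_deriv ?_).hasDerivWithinAt
      ring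
    · intro t _
      refine (((dsin t).const_mul A).congr_deriv ?_).hasDerivWithinAt
      field_simp
      ring
    · simp only [hwT]
      rw [← hS, hA2]
    · have dE : ∀ t : ℝ, HasDerivAt (fun t => 2 * p * ((p - 1 / 2) * A ^ 2 *
          (t / 2 - Real.sin (w * t) * Real.cos (w * t) / (2 * w))) +
          A ^ 2 / c ^ 2 * (w * (Real.sin (w * t) * Real.cos (w * t)) - b * Real.sin (w * t) ^ 2))
          ((p * (A * Real.sin (w * t))) ^ 2 +
            ((A * (Real.cos (w * t) * w) - b * (A * Real.sin (w * t))) / c) ^ 2) t := fun t => by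
        refine (((dy t).const_mul (2 * p)).add (((((dsin t).mul (dcos t)).const_mul w).sub
          (((dsin t).pow 2).const_mul b)).const_mul (A ^ 2 / c ^ 2))).congr_deriv ?_
        field_simp
        push_cast
        linear_combination (A ^ 2 * Real.sin (w * t) ^ 2) * hpp
      rw [intervalIntegral.integral_eq_sub_of_hasDerivAt (fun t _ => dE t)
        (Continuous.intervalIntegrable (by fun_prop) _ _)]
      simp only [hwT]
      rw [← hS, hA2]
      simp
      have : w * (Real.sin r₁ * Real.cos r₁) - b * Real.sin r₁ ^ 2 = 0 := by
        linear_combination Real.sin r₁ * hroot'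
      rw [this]
      ring
  · rintro E ⟨h₁, h₂, u, v, y, z, hu, hv, -, -, -, -, hy, hz, hy0, hz0, hyT, rfl⟩
    have hsint : ∀ t, 0 < t → t ≤ T → 0 < Real.sin (w * t) := fun t h0 h1 => by
      apply Real.sin_pos_of_pos_of_lt_pi (by positivity)
      have : w * t ≤ w * T := by gcongr
      linarith
    have hguv : ContinuousOn (fun t => u t ^ 2 + v t ^ 2) (Set.Icc 0 T) := by fun_prop
    have hint : IntervalIntegrable (fun t => u t ^ 2 + v t ^ 2) MeasureTheory.volume 0 T :=
      (by rwa [Set.uIcc_of_le hT.le] : ContinuousOn _ (Set.uIcc 0 T)).intervalIntegrable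
    have hzc : ContinuousOn z (Set.Icc 0 T) := fun t ht => (hz t ht).continuousWithinAt
    have hyc : ContinuousOn y (Set.Icc 0 T) := fun t ht => (hy t ht).continuousWithinAt
    have hq : ContinuousOn (fun t => Real.cos (w * t) / Real.sin (w * t) * z t ^ 2)
        (Set.Icc 0 T) := by
      intro t ht
      rcases ht.1.eq_or_lt with h | h
      · subst h
        exact cont_zero T w hwpos z _ hz0 (hz 0 ht)
      · have := (dcos t).continuousAt.continuousWithinAt (s := Set.Icc 0 T)
        exact (this.div (dsin t).continuousAt.continuousWithinAt
          (hsint t h ht.2).ne').mul ((hzc t ht).pow 2)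
    have hIc : ContinuousOn (fun t => ∫ s in (0 : ℝ)..t, (u s ^ 2 + v s ^ 2)) (Set.Icc 0 T) := by
      have := intervalIntegral.continuousOn_primitive_interval (μ := MeasureTheory.volume)
        (f := fun t => u t ^ 2 + v t ^ 2) (a := 0) (b := T)
        (by rw [Set.uIcc_of_le hT.le]; exact hguv.integrableOn_Icc)
      rwa [Set.uIcc_of_le hT.le] at this
    have hmono : MonotoneOn (fun t => (1 / 2) * (∫ s in (0 : ℝ)..t, (u s ^ 2 + v s ^ 2)) - p * y t
        - 1 / (2 * c ^ 2) * (w * (Real.cos (w * t) / Real.sin (w * t) * z t ^ 2) - b * z t ^ 2))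
        (Set.Icc 0 T) := by
      apply monotoneOn_of_hasDerivWithinAt_nonneg
        (f' := fun t => 1 / 2 * (u t - p * z t) ^ 2 + 1 / (2 * c ^ 2) *
          ((b * z t + c * v t) - w * (Real.cos (w * t) / Real.sin (w * t)) * z t) ^ 2)
        (convex_Icc 0 T)
      · fun_prop
      · intro t ht
        rw [interior_Icc] at ht ⊢
        have hn : Set.Icc 0 T ∈ nhds t := Icc_mem_nhds ht.1 ht.2
        have htI : t ∈ Set.Icc 0 T := ⟨ht.1.le, ht.2.le⟩
        have hs := (hsint t ht.1 ht.2.le).ne'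
        have dz := (hz t htI).hasDerivAt hn
        have dy := (hy t htI).hasDerivAt hn
        have dI : HasDerivAt (fun t => ∫ s in (0 : ℝ)..t, (u s ^ 2 + v s ^ 2))
            (u t ^ 2 + v t ^ 2) t := by
          apply intervalIntegral.integral_hasDerivAt_right
          · exact hint.mono_set (by
              rw [Set.uIcc_of_le hT.le, Set.uIcc_of_le ht.1.le]
              exact Set.Icc_subset_Icc_right ht.2.le)
          · exact (hguv.mono Set.Ioo_subset_Icc_self).stronglyMeasurableAtFilter isOpen_Ioo t ht
          · exact hguv.continuousAt hn
        have dq := (((dcos t).div (dsin t) hs).mul (dz.pow 2))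
        refine HasDerivAt.hasDerivWithinAt ?_
        refine (((dI.const_mul (1 / 2)).sub (dy.const_mul p)).sub
          (((dq.const_mul w).sub ((dz.pow 2).const_mul b)).const_mul (1 / (2 * c ^ 2)))).congr_deriv ?_
        have hcs := Real.cos_sq_add_sin_sq (w * t)
        have hpp' : p ^ 2 = p + (b ^ 2 + w ^ 2) / c ^ 2 := by
          rw [← hpp]; field_simp; ring
        obtain ⟨q, hq⟩ : ∃ q, q = Real.cos (w * t) / Real.sin (w * t) := ⟨_, rfl⟩
        have hq2 : (-Real.sin (w * t) * w * Real.sin (w * t) -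
            Real.cos (w * t) * (Real.cos (w * t) * w)) / Real.sin (w * t) ^ 2 = -w * (1 + q ^ 2) := by
          rw [hq]; field_simp; ring
        simp only [Pi.div_apply, Pi.pow_apply]
        rw [hq2, ← hq]
        field_simp
        push_cast
        linear_combination (-(z t) ^ 2) * hpp
      · intro t _
        positivity
    have hfin := hmono (Set.left_mem_Icc.2 hT.le) (Set.right_mem_Icc.2 hT.le) hT.le
    have hbd : w * (Real.cos r₁ / Real.sin r₁ * z T ^ 2) - b * z T ^ 2 = 0 := by
      field_simp
      linear_combination (z T ^ 2) * hroot'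
    simp only [hwT, hyT, hy0, hz0, hbd] at hfin
    simp at hfin
    linarith
end

section
/- Let T > 0, b ≤ 0, c > 0, let σ₀, a₀, q₀ be real numbers, let p > 1, and let χ > 0 satisfy χ² + b² = c²·p(p − 1), χ·cos(χT) = b·sin(χT), and 0 < χT < π. Let Ẑ : [0,T] → ℝ be the solution of Ẑ'(t) = b·Ẑ(t) + a₀ with Ẑ(0) = σ₀, and set z(t) = (q₀c²/χ)·sin(χt). Then p(p − 1)·∫₀ᵀ z(t)·Ẑ(t) dt = q₀·(σ₀ + a₀·tan(χT/2)/χ). -/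
/-- Closed form for the second-order constant in the uncorrelated Stein–Stein model:
`p(p−1)·∫₀ᵀ z(t)Ẑ(t) dt = q₀(σ₀ + a₀·tan(χT/2)/χ)` where `z(t) = (q₀c²/χ)sin(χt)`
and `Ẑ' = bẐ + a₀`, `Ẑ(0) = σ₀`. -/
theorem stein_stein_uncorrelated_c2_formula
    (T b c σ₀ a₀ q₀ p χ : ℝ) (hT : 0 < T) (hb : b ≤ 0) (hc : 0 < c)
    (hp : 1 < p) (hχ : 0 < χ)
    (hχ2 : χ ^ 2 + b ^ 2 = c ^ 2 * p * (p - 1))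
    (htrans : χ * Real.cos (χ * T) = b * Real.sin (χ * T))
    (hχT0 : 0 < χ * T) (hχT : χ * T < Real.pi)
    (Z : ℝ → ℝ)
    (hZ : ∀ t ∈ Set.Icc (0 : ℝ) T,
      HasDerivWithinAt Z (b * Z t + a₀) (Set.Icc (0 : ℝ) T) t)
    (hZ0 : Z 0 = σ₀) :
    p * (p - 1) * ∫ t in (0 : ℝ)..T, (q₀ * c ^ 2 / χ * Real.sin (χ * t) * Z t)
      = q₀ * (σ₀ + a₀ * Real.tan (χ * T / 2) / χ) := by
  have hD : 0 < χ ^ 2 + b ^ 2 := by positivity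
  have hZc : ContinuousOn Z (Set.Icc 0 T) := fun t ht => (hZ t ht).continuousWithinAt
  have key : ∫ t in (0 : ℝ)..T, ((χ ^ 2 + b ^ 2) * (Real.sin (χ * t) * Z t))
      = ((-χ * Real.cos (χ * T) + b * Real.sin (χ * T)) * Z T
          + a₀ * (b / χ * Real.cos (χ * T) + Real.sin (χ * T)))
        - ((-χ * Real.cos (χ * 0) + b * Real.sin (χ * 0)) * Z 0
          + a₀ * (b / χ * Real.cos (χ * 0) + Real.sin (χ * 0))) := by
    refine intervalIntegral.integral_eq_sub_of_hasDerivAt_of_le (f := fun t =>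
      (-χ * Real.cos (χ * t) + b * Real.sin (χ * t)) * Z t
          + a₀ * (b / χ * Real.cos (χ * t) + Real.sin (χ * t))) hT.le ?_ ?_ ?_
    · fun_prop
    · intro t ht
      have hz := (hZ t (Set.Ioo_subset_Icc_self ht)).hasDerivAt (Icc_mem_nhds ht.1 ht.2)
      have hl : HasDerivAt (fun t : ℝ => χ * t) χ t := by
        simpa using (hasDerivAt_id t).const_mul χ
      have hs := hl.sin
      have hk := hl.cos
      have h := (((hk.const_mul (-χ)).add (hs.const_mul b)).mul hz).add
        (((hk.const_mul (b / χ)).add hs).const_mul a₀)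
      refine h.congr_deriv ?_
      simp only [Pi.add_apply]
      field_simp
      ring
    · apply ContinuousOn.intervalIntegrable
      rw [Set.uIcc_of_le hT.le]
      fun_prop
  have e1 : p * (p - 1) * ∫ t in (0 : ℝ)..T, (q₀ * c ^ 2 / χ * Real.sin (χ * t) * Z t)
      = q₀ / χ * ∫ t in (0 : ℝ)..T, ((χ ^ 2 + b ^ 2) * (Real.sin (χ * t) * Z t)) := by
    rw [← intervalIntegral.integral_const_mul, ← intervalIntegral.integral_const_mul]
    congr 1
    funext t
    rw [hχ2]
    ring
  have hs : 0 < Real.sin (χ * T / 2) := Real.sin_pos_of_pos_of_lt_pi (by linarith) (by linarith)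
  have hk : 0 < Real.cos (χ * T / 2) :=
    Real.cos_pos_of_mem_Ioo ⟨by linarith, by linarith⟩
  have h2 : χ * T = 2 * (χ * T / 2) := by ring
  have hsin : Real.sin (χ * T) = 2 * Real.sin (χ * T / 2) * Real.cos (χ * T / 2) := by
    conv_lhs => rw [h2, Real.sin_two_mul]
  have hcos : Real.cos (χ * T) = 2 * Real.cos (χ * T / 2) ^ 2 - 1 := by
    conv_lhs => rw [h2, Real.cos_two_mul]
  have hsq := Real.sin_sq_add_cos_sq (χ * T / 2)
  have tr : b / χ * Real.cos (χ * T) + Real.sin (χ * T) - b / χ = Real.tan (χ * T / 2) := by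
    rw [Real.tan_eq_sin_div_cos]
    rw [hsin, hcos] at htrans ⊢
    generalize Real.sin (χ * T / 2) = s at *
    generalize Real.cos (χ * T / 2) = k at *
    have hbe : b = χ * (2 * k ^ 2 - 1) / (2 * s * k) := by
      field_simp
      linarith
    have hs2 : s ^ 2 = 1 - k ^ 2 := by linarith
    rw [hbe]
    field_simp
    rw [hs2]
    ring
  have h0 : -χ * Real.cos (χ * T) + b * Real.sin (χ * T) = 0 := by linarith
  rw [e1, key, h0, ← tr, hZ0]
  simp only [mul_zero, Real.cos_zero, Real.sin_zero]
  field_simp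
  ring
end

section
/- Let T > 0, c > 0, b ≤ 0 and ρ ∈ (−1, 0]. For r > 0 let p⁺(r) = (1/(2(1 − ρ²)))·[(1 + 2ρb/c) + √((1 + 2ρb/c)² + 4(1 − ρ²)·(b²/c² + r²/(c²T²)))]. Then the set {r ∈ [π/2, π) : r·cos r = (b + ρc·p⁺(r))·T·sin r} is nonempty and possesses a smallest element r₁⁺. -/
/-- The unique positive root `p⁺(r)` of the quadratic
`c²p(p−1) − (b + ρcp)² = r²/T²` in the correlated Stein–Stein model. -/
noncomputable def pPlus (b c T ρ r : ℝ) : ℝ :=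
  (1 / (2 * (1 - ρ ^ 2))) * ((1 + 2 * ρ * b / c)
    + Real.sqrt ((1 + 2 * ρ * b / c) ^ 2
        + 4 * (1 - ρ ^ 2) * (b ^ 2 / c ^ 2 + r ^ 2 / (c ^ 2 * T ^ 2))))

/-- The set of `r ∈ [π/2, π)` solving the correlated transversality equation
`r·cos r = (b + ρc·p⁺(r))·T·sin r` is nonempty and has a smallest element. -/
theorem correlated_transversality_first_root
    (T b c ρ : ℝ) (hT : 0 < T) (hc : 0 < c) (hb : b ≤ 0)
    (hρ : ρ ∈ Set.Ioc (-1 : ℝ) 0) :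
    ∃ r₁ : ℝ, IsLeast
      {r : ℝ | r ∈ Set.Ico (Real.pi / 2) Real.pi ∧
        r * Real.cos r = (b + ρ * c * pPlus b c T ρ r) * T * Real.sin r} r₁ := by
  obtain ⟨hρ1, hρ0⟩ := hρ
  have hpi := Real.pi_pos
  have hq : 0 < 1 - ρ ^ 2 := by nlinarith
  have hcont : Continuous (fun r : ℝ =>
      r * Real.cos r - (b + ρ * c * pPlus b c T ρ r) * T * Real.sin r) := by
    unfold pPlus
    fun_prop
  have hp : 0 ≤ pPlus b c T ρ (Real.pi / 2) := by
    unfold pPlus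
    have h1 : 0 ≤ 2 * ρ * b / c := by
      apply div_nonneg _ hc.le
      nlinarith [mul_nonneg_of_nonpos_of_nonpos hρ0 hb]
    positivity
  have hK : (b + ρ * c * pPlus b c T ρ (Real.pi / 2)) * T ≤ 0 := by
    apply mul_nonpos_of_nonpos_of_nonneg _ hT.le
    have := mul_nonpos_of_nonpos_of_nonneg hρ0 (mul_nonneg hc.le hp)
    nlinarith
  set F : ℝ → ℝ := fun r : ℝ =>
      r * Real.cos r - (b + ρ * c * pPlus b c T ρ r) * T * Real.sin r with hF
  have hFa : 0 ≤ F (Real.pi / 2) := by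
    simp only [hF, Real.cos_pi_div_two, Real.sin_pi_div_two]
    linarith
  have hFb : F Real.pi < 0 := by
    simp only [hF, Real.cos_pi, Real.sin_pi]
    linarith
  have hcomp : IsCompact (Set.Icc (Real.pi / 2) Real.pi ∩ F ⁻¹' {0}) :=
    isCompact_Icc.inter_right (isClosed_singleton.preimage hcont)
  have hne : (Set.Icc (Real.pi / 2) Real.pi ∩ F ⁻¹' {0}).Nonempty := by
    obtain ⟨x, hx, hx0⟩ := intermediate_value_Icc' (by linarith : Real.pi / 2 ≤ Real.pi)
      hcont.continuousOn (Set.mem_Icc.mpr ⟨hFb.le, hFa⟩)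
    exact ⟨x, hx, hx0⟩
  obtain ⟨r, ⟨hr, hr0⟩, hmin⟩ := hcomp.exists_isLeast hne
  have hr0' : F r = 0 := hr0
  refine ⟨r, ⟨⟨hr.1, lt_of_le_of_ne hr.2 ?_⟩, sub_eq_zero.mp hr0'⟩, ?_⟩
  · intro h
    rw [h] at hr0'
    linarith
  · rintro s ⟨hs, hs0⟩
    exact hmin ⟨⟨hs.1, hs.2.le⟩, sub_eq_zero.mpr hs0⟩
end

section
/- Let T > 0, c > 0, b ≤ 0, ρ ∈ (−1, 0], a > 0 and p ∈ ℝ, and set b̃ = b + ρcp. Suppose y, z, q : [0,T] → ℝ are differentiable and satisfy the correlated Stein–Stein Hamiltonian system y' = z²(p − 1/2) + ρczq, z' = b̃z + c²q, q' = pz(1 − p) − b̃q, with y(0) = z(0) = 0, y(T) = a and q(T) = 0. Then p > 1, χ² := c²p(p − 1) − b̃² > 0, and, writing χ > 0 for its square root and r := χT, one has r·cos r = b̃T·sin r, p = (1/(2(1 − ρ²)))·[(1 + 2ρb/c) + √((1 + 2ρb/c)² + 4(1 − ρ²)·(b²/c² + r²/(c²T²)))], the quantity D := (c²(2p − 1)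 − 2ρc·b̃)·(2r − sin(2r)) + 2ρc·(r/T)·(1 − cos(2r)) is strictly positive, and q(0)² = 8r³a/(c²T³·D). -/
theorem ss_mono {T : ℝ} {f f' : ℝ → ℝ}
    (hf : ∀ t ∈ Set.Icc (0 : ℝ) T, HasDerivWithinAt f (f' t) (Set.Icc (0 : ℝ) T) t)
    (h0 : ∀ t ∈ Set.Icc (0 : ℝ) T, 0 ≤ f' t) : MonotoneOn f (Set.Icc (0 : ℝ) T) := by
  refine monotoneOn_of_hasDerivWithinAt_nonneg (f' := f') (convex_Icc 0 T)
    (fun t ht => (hf t ht).continuousWithinAt) ?_ ?_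
  · intro t ht
    exact (hf t (interior_subset ht)).mono interior_subset
  · intro t ht
    exact h0 t (interior_subset ht)

theorem ss_const_s13 {T : ℝ} (hT : 0 < T) {f f' : ℝ → ℝ}
    (hf : ∀ t ∈ Set.Icc (0 : ℝ) T, HasDerivWithinAt f (f' t) (Set.Icc (0 : ℝ) T) t)
    (h0 : ∀ t ∈ Set.Icc (0 : ℝ) T, f' t = 0) : ∀ t ∈ Set.Icc (0 : ℝ) T, f t = f 0 := by
  intro t ht
  have h1 := ss_mono hf (fun t ht => (h0 t ht).ge) (Set.left_mem_Icc.2 hT.le) ht ht.1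
  have h2 := ss_mono (fun t ht => (hf t ht).neg) (fun t ht => by simp [h0 t ht])
    (Set.left_mem_Icc.2 hT.le) ht ht.1
  simp only [Pi.neg_apply] at h2
  linarith

/-- Necessary conditions satisfied by any solution of the correlated Stein–Stein
Hamiltonian boundary value problem: `p > 1`, `χ² := c²p(p−1) − b̃² > 0`, the
transversality equation for `r = χT`, the formula `p = p⁺(r)`, positivity of the
normalizing quantity `D`, and the value of `q(0)²`. -/
theorem stein_stein_correlated_bvp_necessary
    (T c b ρ a p : ℝ) (hT : 0 < T) (hc : 0 < c) (hb : b ≤ 0)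
    (hρ : ρ ∈ Set.Ioc (-1 : ℝ) 0) (ha : 0 < a)
    (y z q : ℝ → ℝ)
    (hy : ∀ t ∈ Set.Icc (0 : ℝ) T,
      HasDerivWithinAt y (z t ^ 2 * (p - 1 / 2) + ρ * c * z t * q t) (Set.Icc (0 : ℝ) T) t)
    (hz : ∀ t ∈ Set.Icc (0 : ℝ) T,
      HasDerivWithinAt z ((b + ρ * c * p) * z t + c ^ 2 * q t) (Set.Icc (0 : ℝ) T) t)
    (hq : ∀ t ∈ Set.Icc (0 : ℝ) T,
      HasDerivWithinAt q (p * z t * (1 - p) - (b + ρ * c * p) * q t) (Set.Icc (0 : ℝ) T) t)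
    (hy0 : y 0 = 0) (hz0 : z 0 = 0) (hyT : y T = a) (hqT : q T = 0) :
    1 < p ∧ 0 < c ^ 2 * p * (p - 1) - (b + ρ * c * p) ^ 2 ∧
    ∃ χ : ℝ, 0 < χ ∧ χ ^ 2 = c ^ 2 * p * (p - 1) - (b + ρ * c * p) ^ 2 ∧
      (χ * T) * Real.cos (χ * T) = (b + ρ * c * p) * T * Real.sin (χ * T) ∧
      p = pPlus b c T ρ (χ * T) ∧
      0 < (c ^ 2 * (2 * p - 1) - 2 * ρ * c * (b + ρ * c * p))
            * (2 * (χ * T) - Real.sin (2 * (χ * T)))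
          + 2 * ρ * c * ((χ * T) / T) * (1 - Real.cos (2 * (χ * T))) ∧
      q 0 ^ 2 = 8 * (χ * T) ^ 3 * a / (c ^ 2 * T ^ 3 *
          ((c ^ 2 * (2 * p - 1) - 2 * ρ * c * (b + ρ * c * p))
              * (2 * (χ * T) - Real.sin (2 * (χ * T)))
            + 2 * ρ * c * ((χ * T) / T) * (1 - Real.cos (2 * (χ * T))))) := by
  have hρ1 := hρ.1
  have hρ0 := hρ.2
  have h0m : (0 : ℝ) ∈ Set.Icc (0 : ℝ) T := Set.left_mem_Icc.2 hT.le
  have hTm : T ∈ Set.Icc (0 : ℝ) T := Set.right_mem_Icc.2 hT.le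
  have hρs : 0 < 1 - ρ ^ 2 := by nlinarith
  have hρb : 0 ≤ ρ * b / c := div_nonneg (mul_nonneg_of_nonpos_of_nonpos hρ0 hb) hc.le
  have hcne : c ≠ 0 := hc.ne'
  have hF : ∀ t ∈ Set.Icc (0 : ℝ) T,
      HasDerivWithinAt (fun t => y t - ρ / (2 * c) * (z t) ^ 2)
        ((p * (1 - ρ ^ 2) - 1 / 2 - ρ * b / c) * z t ^ 2) (Set.Icc (0 : ℝ) T) t := by
    intro t ht
    refine ((hy t ht).sub (((hz t ht).pow 2).const_mul (ρ / (2 * c)))).congr_deriv ?_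
    push_cast
    field_simp
    ring
  have hrc : ρ / (2 * c) ≤ 0 := div_nonpos_of_nonpos_of_nonneg hρ0 (by linarith)
  have hp : 0 < p := by
    by_contra hp
    push Not at hp
    have h := ss_mono (fun t ht => (hF t ht).neg) (fun t ht => by
      have : p * (1 - ρ ^ 2) ≤ 0 := mul_nonpos_of_nonpos_of_nonneg hp hρs.le
      nlinarith [sq_nonneg (z t)]) h0m hTm hT.le
    simp only [Pi.neg_apply, hy0, hz0, hyT] at h
    nlinarith [sq_nonneg (z T)]
  have hzero : (∀ t ∈ Set.Icc (0 : ℝ) T, z t = 0) → False := by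
    intro h
    have h1 := ss_const_s13 hT hF (fun t ht => by rw [h t ht]; ring) T hTm
    simp only [hy0, hz0, hyT, h T hTm] at h1
    linarith
  set B := b + ρ * c * p with hB
  have hB0 : B ≤ 0 := by
    have : 0 ≤ (-ρ) * (c * p) := mul_nonneg (by linarith) (by positivity)
    rw [hB]; linarith
  set κ := c ^ 2 * p * (p - 1) - B ^ 2 with hκ
  have hw : ∀ t ∈ Set.Icc (0 : ℝ) T,
      HasDerivWithinAt (fun t => B * z t + c ^ 2 * q t) (-κ * z t) (Set.Icc (0 : ℝ) T) t := by
    intro t ht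
    refine (((hz t ht).const_mul B).add ((hq t ht).const_mul (c ^ 2))).congr_deriv ?_
    rw [hκ]; ring
  obtain ⟨w, hwdef⟩ : ∃ w : ℝ → ℝ, w = fun t => B * z t + c ^ 2 * q t := ⟨_, rfl⟩
  have hwt : ∀ t, B * z t + c ^ 2 * q t = w t := fun t => by rw [hwdef]
  rw [← hwdef] at hw
  simp only [hwt] at hz
  have hw0 : w 0 = c ^ 2 * q 0 := by rw [← hwt, hz0]; ring
  have hwT : w T = B * z T := by rw [← hwt, hqT]; ring
  have hκ0 : 0 < κ := by
    by_contra hk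
    push Not at hk
    have hG : ∀ t ∈ Set.Icc (0 : ℝ) T,
        HasDerivWithinAt (fun t => z t * w t) (w t * w t + z t * (-κ * z t))
          (Set.Icc (0 : ℝ) T) t := fun t ht => (hz t ht).mul (hw t ht)
    have hm := ss_mono hG (fun t ht => by nlinarith [sq_nonneg (z t), sq_nonneg (w t)])
    have hG0 : ∀ t ∈ Set.Icc (0 : ℝ) T, z t * w t = 0 := by
      intro t ht
      have h1 := hm h0m ht ht.1
      have h2 := hm ht hTm ht.2
      simp only [hz0, hwT] at h1 h2
      nlinarith [sq_nonneg (z T)]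
    apply hzero
    intro t ht
    have := ss_const_s13 hT (fun t ht => (hz t ht).pow 2) (fun t ht => by
      have := hG0 t ht
      push_cast
      linear_combination 2 * this) t ht
    simp only [Pi.pow_apply, hz0] at this
    simpa using this
  have hp1 : 1 < p := by
    by_contra h
    push Not at h
    have : c ^ 2 * p * (p - 1) ≤ 0 :=
      mul_nonpos_of_nonneg_of_nonpos (by positivity) (by linarith)
    nlinarith [sq_nonneg B]
  refine ⟨hp1, hκ0, Real.sqrt κ, Real.sqrt_pos.2 hκ0, Real.sq_sqrt hκ0.le, ?_⟩
  have hχ := Real.sqrt_pos.2 hκ0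
  have hχ2 := Real.sq_sqrt hκ0.le
  generalize Real.sqrt κ = χ at hχ hχ2
  have hs : ∀ t ∈ Set.Icc (0 : ℝ) T, HasDerivWithinAt (fun t => Real.sin (χ * t))
      (Real.cos (χ * t) * χ) (Set.Icc (0 : ℝ) T) t := fun t _ => by
    simpa using (((hasDerivAt_id t).const_mul χ).sin).hasDerivWithinAt
  have hco : ∀ t ∈ Set.Icc (0 : ℝ) T, HasDerivWithinAt (fun t => Real.cos (χ * t))
      (-Real.sin (χ * t) * χ) (Set.Icc (0 : ℝ) T) t := fun t _ => by
    simpa using (((hasDerivAt_id t).const_mul χ).cos).hasDerivWithinAt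
  have hU := ss_const_s13 hT (fun t ht => (((hz t ht).const_mul χ).mul (hco t ht)).sub
    ((hw t ht).mul (hs t ht))) (fun t ht => by
      linear_combination (-(z t) * Real.sin (χ * t)) * hχ2)
  have hV := ss_const_s13 hT (fun t ht => (((hz t ht).const_mul χ).mul (hs t ht)).add
    ((hw t ht).mul (hco t ht))) (fun t ht => by
      linear_combination ((z t) * Real.cos (χ * t)) * hχ2)
  simp only [Pi.sub_apply, Pi.add_apply, Pi.mul_apply, hz0, mul_zero, Real.sin_zero,
    Real.cos_zero, zero_mul, sub_zero, zero_add, mul_one] at hU hV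
  have hzs : ∀ t ∈ Set.Icc (0 : ℝ) T, χ * z t = w 0 * Real.sin (χ * t) := fun t ht => by
    linear_combination Real.cos (χ * t) * hU t ht + Real.sin (χ * t) * hV t ht
      - χ * z t * Real.sin_sq_add_cos_sq (χ * t)
  have hwc : ∀ t ∈ Set.Icc (0 : ℝ) T, w t = w 0 * Real.cos (χ * t) := fun t ht => by
    linear_combination -Real.sin (χ * t) * hU t ht + Real.cos (χ * t) * hV t ht
      - w t * Real.sin_sq_add_cos_sq (χ * t)
  have hw0ne : w 0 ≠ 0 := by
    intro h
    apply hzero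
    intro t ht
    have := hzs t ht
    rw [h, zero_mul] at this
    exact (mul_eq_zero.1 this).resolve_left hχ.ne'
  have hY := ss_const_s13 hT (fun t ht => ((hF t ht).const_mul (4 * χ ^ 3)).sub
    ((((hasDerivAt_id t).const_mul (2 * χ)).hasDerivWithinAt.sub
      (((hs t ht).const_mul 2).mul (hco t ht))).const_mul
        ((p * (1 - ρ ^ 2) - 1 / 2 - ρ * b / c) * w 0 ^ 2))) (fun t ht => by
      have h1 : χ ^ 2 * z t ^ 2 = w 0 ^ 2 * Real.sin (χ * t) ^ 2 := by
        rw [← mul_pow, hzs t ht, mul_pow]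
      linear_combination (4 * χ * (p * (1 - ρ ^ 2) - 1 / 2 - ρ * b / c)) * h1
        - 2 * χ * w 0 ^ 2 * (p * (1 - ρ ^ 2) - 1 / 2 - ρ * b / c) *
          -Real.sin_sq_add_cos_sq (χ * t)) T hTm
  simp only [Pi.sub_apply, Pi.mul_apply, hy0, hz0, hyT, id, mul_zero, Real.sin_zero,
    zero_mul, sub_zero, ne_eq, OfNat.ofNat_ne_zero, not_false_eq_true, zero_pow] at hY
  have hzT2 : χ ^ 2 * z T ^ 2 = w 0 ^ 2 * Real.sin (χ * T) ^ 2 := by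
    rw [← mul_pow, hzs T hTm, mul_pow]
  have hDeq : 8 * χ ^ 3 * a = c ^ 2 * q 0 ^ 2 * ((c ^ 2 * (2 * p - 1) - 2 * ρ * c * B)
            * (2 * (χ * T) - Real.sin (2 * (χ * T)))
          + 2 * ρ * c * ((χ * T) / T) * (1 - Real.cos (2 * (χ * T)))) := by
    rw [mul_div_assoc, div_self hT.ne', Real.sin_two_mul, Real.cos_two_mul]
    rw [hw0] at hY hzT2
    rw [hB]
    have e1 : Real.cos (χ * T) ^ 2 = 1 - Real.sin (χ * T) ^ 2 := by
      linear_combination Real.sin_sq_add_cos_sq (χ * T)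
    rw [e1]
    linear_combination (norm := skip) 2 * hY + 4 * χ * ρ / c * hzT2
    field_simp
    ring
  have hq0 : q 0 ≠ 0 := by
    intro h
    exact hw0ne (by rw [hw0, h]; ring)
  have hDpos : 0 < (c ^ 2 * (2 * p - 1) - 2 * ρ * c * B)
            * (2 * (χ * T) - Real.sin (2 * (χ * T)))
          + 2 * ρ * c * ((χ * T) / T) * (1 - Real.cos (2 * (χ * T))) := by
    have h1 : 0 < 8 * χ ^ 3 * a := by positivity
    rw [hDeq] at h1
    exact (pos_iff_pos_of_mul_pos h1).1 (by positivity)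
  refine ⟨?_, ?_, hDpos, ?_⟩
  · have h1 := hzs T hTm
    have h2 := hwc T hTm
    rw [hwT] at h2
    apply mul_left_cancel₀ hw0ne
    linear_combination (-χ * T) * h2 + B * T * h1
  · have hquad : (1 - ρ ^ 2) * p ^ 2 - (1 + 2 * ρ * b / c) * p
        = b ^ 2 / c ^ 2 + (χ * T) ^ 2 / (c ^ 2 * T ^ 2) := by
      rw [mul_pow, mul_div_mul_right _ _ (by positivity), hχ2, hκ, hB]
      field_simp
      ring
    have hrhs : 0 ≤ b ^ 2 / c ^ 2 + (χ * T) ^ 2 / (c ^ 2 * T ^ 2) := by positivity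
    have hge : 0 ≤ 2 * (1 - ρ ^ 2) * p - (1 + 2 * ρ * b / c) := by
      have : 0 ≤ ((1 - ρ ^ 2) * p - (1 + 2 * ρ * b / c)) * p := by linarith
      have := nonneg_of_mul_nonneg_left this hp
      linarith [mul_pos hρs hp]
    unfold pPlus
    rw [← hquad, show (1 + 2 * ρ * b / c) ^ 2 + 4 * (1 - ρ ^ 2) *
      ((1 - ρ ^ 2) * p ^ 2 - (1 + 2 * ρ * b / c) * p)
      = (2 * (1 - ρ ^ 2) * p - (1 + 2 * ρ * b / c)) ^ 2 by ring, Real.sqrt_sq hge]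
    have := hρs.ne'
    rw [add_sub_cancel]
    rw [mul_right_comm 2, one_div, mul_right_comm 2 p, inv_mul_cancel_left₀ (by positivity)]
  · rw [eq_div_iff (by positivity)]
    linear_combination (-T ^ 3) * hDeq
end

section
/- Let T > 0, c > 0, b ≤ 0, ρ ∈ (−1, 0], a > 0, and let r > 0 satisfy r·cos r = (b + ρc·p⁺(r))·T·sin r, where p⁺(r) = (1/(2(1 − ρ²)))·[(1 + 2ρb/c) + √((1 + 2ρb/c)² + 4(1 − ρ²)·(b²/c² + r²/(c²T²)))]. Set p = p⁺(r), b̃ = b + ρcp, χ = r/T, and assume D := (c²(2p − 1) − 2ρc·b̃)·(2r − sin(2r)) + 2ρc·(r/T)·(1 − cos(2r)) > 0; let q₀ ∈ ℝ satisfy q₀² = 8r³a/(c²T³·D). Then the functions z(t) = (q₀c²/χ)·sin(χt), q(t) = q₀·(cos(χt) − (b̃/χ)·sin(χt)) and y(t) = (q₀²c²/(8χ³))·[(c²(2p − 1) − 2ρc·b̃)·(2χt − sin(2χt)) + 2ρc·χ·(1 − cos(2χt))] satisfy the correlated Stein–Stein Hamiltonian system y' = z²(p − 1/2) + ρczq,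 z' = b̃z + c²q, q' = pz(1 − p) − b̃q on [0,T], together with the boundary conditions y(0) = z(0) = 0, q(0) = q₀, y(T) = a and q(T) = 0. -/
/-- Sufficiency: the explicit flow formulas built from a root `r` of the correlated
transversality equation solve the correlated Stein–Stein Hamiltonian boundary value
problem with the prescribed boundary conditions. -/
theorem stein_stein_correlated_bvp_sufficient
    (T c b ρ a r q₀ p btilde χ D : ℝ)
    (hT : 0 < T) (hc : 0 < c) (hb : b ≤ 0) (hρ : ρ ∈ Set.Ioc (-1 : ℝ) 0)
    (ha : 0 < a) (hr : 0 < r)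
    (hp : p = pPlus b c T ρ r)
    (hroot : r * Real.cos r = (b + ρ * c * pPlus b c T ρ r) * T * Real.sin r)
    (hbt : btilde = b + ρ * c * p)
    (hχ : χ = r / T)
    (hD : D = (c ^ 2 * (2 * p - 1) - 2 * ρ * c * btilde) * (2 * r - Real.sin (2 * r))
        + 2 * ρ * c * (r / T) * (1 - Real.cos (2 * r)))
    (hDpos : 0 < D)
    (hq₀ : q₀ ^ 2 = 8 * r ^ 3 * a / (c ^ 2 * T ^ 3 * D)) :
    (∀ t ∈ Set.Icc (0 : ℝ) T,
      HasDerivAt (fun s : ℝ => q₀ ^ 2 * c ^ 2 / (8 * χ ^ 3) *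
          ((c ^ 2 * (2 * p - 1) - 2 * ρ * c * btilde) * (2 * χ * s - Real.sin (2 * χ * s))
            + 2 * ρ * c * χ * (1 - Real.cos (2 * χ * s))))
        ((q₀ * c ^ 2 / χ * Real.sin (χ * t)) ^ 2 * (p - 1 / 2)
          + ρ * c * (q₀ * c ^ 2 / χ * Real.sin (χ * t))
            * (q₀ * (Real.cos (χ * t) - btilde / χ * Real.sin (χ * t)))) t ∧
      HasDerivAt (fun s : ℝ => q₀ * c ^ 2 / χ * Real.sin (χ * s))
        (btilde * (q₀ * c ^ 2 / χ * Real.sin (χ * t))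
          + c ^ 2 * (q₀ * (Real.cos (χ * t) - btilde / χ * Real.sin (χ * t)))) t ∧
      HasDerivAt (fun s : ℝ => q₀ * (Real.cos (χ * s) - btilde / χ * Real.sin (χ * s)))
        (p * (q₀ * c ^ 2 / χ * Real.sin (χ * t)) * (1 - p)
          - btilde * (q₀ * (Real.cos (χ * t) - btilde / χ * Real.sin (χ * t)))) t) ∧
    q₀ ^ 2 * c ^ 2 / (8 * χ ^ 3) *
        ((c ^ 2 * (2 * p - 1) - 2 * ρ * c * btilde) * (2 * χ * 0 - Real.sin (2 * χ * 0))
          + 2 * ρ * c * χ * (1 - Real.cos (2 * χ * 0))) = 0 ∧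
    q₀ * c ^ 2 / χ * Real.sin (χ * 0) = 0 ∧
    q₀ * (Real.cos (χ * 0) - btilde / χ * Real.sin (χ * 0)) = q₀ ∧
    q₀ ^ 2 * c ^ 2 / (8 * χ ^ 3) *
        ((c ^ 2 * (2 * p - 1) - 2 * ρ * c * btilde) * (2 * χ * T - Real.sin (2 * χ * T))
          + 2 * ρ * c * χ * (1 - Real.cos (2 * χ * T))) = a ∧
    q₀ * (Real.cos (χ * T) - btilde / χ * Real.sin (χ * T)) = 0 := by
  have hχpos : 0 < χ := by rw [hχ]; positivity
  have hχ0 : χ ≠ 0 := hχpos.ne'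
  have hT0 : T ≠ 0 := hT.ne'
  have hc0 : c ≠ 0 := hc.ne'
  have hr0 : r ≠ 0 := hr.ne'
  have hD0 : D ≠ 0 := hDpos.ne'
  have hχT : χ * T = r := by rw [hχ]; field_simp
  have hχT2 : 2 * χ * T = 2 * r := by rw [mul_assoc, hχT]
  have hk : 0 < 1 - ρ ^ 2 := by
    obtain ⟨h1, h2⟩ := hρ
    nlinarith
  -- the quadratic equation for `p`
  have hquad : (1 - ρ ^ 2) * p ^ 2 - (1 + 2 * ρ * b / c) * p
      = b ^ 2 / c ^ 2 + χ ^ 2 / c ^ 2 := by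
    have hX : r ^ 2 / (c ^ 2 * T ^ 2) = χ ^ 2 / c ^ 2 := by
      rw [hχ]; field_simp
    have hp' := hp
    unfold pPlus at hp'
    rw [hX] at hp'
    generalize 1 + 2 * ρ * b / c = B at *
    have hN : 0 ≤ b ^ 2 / c ^ 2 + χ ^ 2 / c ^ 2 := by positivity
    generalize b ^ 2 / c ^ 2 + χ ^ 2 / c ^ 2 = N at *
    generalize 1 - ρ ^ 2 = k at *
    have hs := Real.sq_sqrt (show 0 ≤ B ^ 2 + 4 * k * N by positivity)
    generalize Real.sqrt (B ^ 2 + 4 * k * N) = S at *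
    have hS : S = 2 * k * p - B := by
      rw [hp']; field_simp; ring
    rw [hS] at hs
    have h4 : (4 * k) * (k * p ^ 2 - B * p) = (4 * k) * N := by linarith
    exact mul_left_cancel₀ (by positivity) h4
  have hquad2 : c ^ 2 * p * (p - 1) - btilde ^ 2 = χ ^ 2 := by
    rw [hbt]
    field_simp at hquad
    linarith
  have htrans : χ * Real.cos r = btilde * Real.sin r := by
    rw [← hp, ← hbt] at hroot
    apply mul_left_cancel₀ hT0
    calc T * (χ * Real.cos r) = (χ * T) * Real.cos r := by ring
      _ = T * (btilde * Real.sin r) := by rw [hχT, hroot]; ring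
  refine ⟨?_, by simp, by simp, by simp, ?_, ?_⟩
  · intro t _
    have hlin : HasDerivAt (fun s : ℝ => χ * s) χ t := by
      simpa using (hasDerivAt_id t).const_mul χ
    have hlin2 : HasDerivAt (fun s : ℝ => 2 * χ * s) (2 * χ) t := by
      simpa using (hasDerivAt_id t).const_mul (2 * χ)
    have hcs := Real.sin_sq_add_cos_sq (χ * t)
    refine ⟨?_, ?_, ?_⟩
    · have h := (((hlin2.sub hlin2.sin).const_mul
        (c ^ 2 * (2 * p - 1) - 2 * ρ * c * btilde)).add
        ((hlin2.cos.const_sub 1).const_mul (2 * ρ * c * χ))).const_mul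
        (q₀ ^ 2 * c ^ 2 / (8 * χ ^ 3))
      refine h.congr_deriv ?_
      rw [mul_assoc 2 χ t, Real.cos_two_mul, Real.sin_two_mul, Real.cos_sq']
      field_simp
      ring
    · refine (hlin.sin.const_mul (q₀ * c ^ 2 / χ)).congr_deriv ?_
      field_simp
      ring
    · refine ((hlin.cos.sub (hlin.sin.const_mul (btilde / χ))).const_mul q₀).congr_deriv ?_
      field_simp
      linear_combination q₀ * Real.sin (χ * t) * hquad2
  · rw [hχT2]
    rw [← hχ] at hD
    rw [← hD, hq₀, hχ]
    field_simp
  · rw [hχT]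
    have : Real.cos r - btilde / χ * Real.sin r = 0 := by
      field_simp
      linarith
    rw [this, mul_zero]
end

section
/- Let T > 0, c > 0, b ≤ 0, ρ ∈ (−1, 0] and a > 0. Let r₁⁺ be the smallest element of {r ∈ [π/2, π) : r·cos r = (b + ρc·p⁺(r))·T·sin r}, where p⁺(r) = (1/(2(1 − ρ²)))·[(1 + 2ρb/c) + √((1 + 2ρb/c)² + 4(1 − ρ²)·(b²/c² + r²/(c²T²)))], and set p₁⁺ = p⁺(r₁⁺). Consider all pairs consisting of a continuously differentiable control h = (h¹, h²) : [0,T] → ℝ² with h(0) = 0 and differentiable functions y, z : [0,T] → ℝ satisfying y'(t) = −z(t)²/2 + z(t)·(√(1 − ρ²)·(h¹)'(t) + ρ·(h²)'(t)), z'(t) = b·z(t) + c·(h²)'(t), with y(0) = z(0) = 0 and y(T) = a. Then the infimum of the energy (1/2)·∫₀ᵀ (((h¹)'(t))² + ((h²)'(t))²) dt over all such pairs equals p₁⁺·a, and this infimum is attained. -/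
lemma pPlus_quad (T c b ρ r : ℝ) (hT : 0 < T) (hc : 0 < c) (hb : b ≤ 0)
    (hρ : ρ ∈ Set.Ioc (-1 : ℝ) 0) :
    0 < pPlus b c T ρ r ∧
    c ^ 2 * (pPlus b c T ρ r * (pPlus b c T ρ r - 1))
      = (b + ρ * c * pPlus b c T ρ r) ^ 2 + (r / T) ^ 2 := by
  obtain ⟨h1, h2⟩ := hρ
  have hA : 0 < 1 - ρ ^ 2 := by nlinarith
  have hB : 0 < 1 + 2 * ρ * b / c := by
    have : 0 ≤ 2 * ρ * b / c := div_nonneg (by nlinarith [mul_nonneg_of_nonpos_of_nonpos h2 hb]) hc.le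
    linarith
  have hD : 0 ≤ b ^ 2 / c ^ 2 + r ^ 2 / (c ^ 2 * T ^ 2) := by positivity
  have hS : 0 ≤ (1 + 2 * ρ * b / c) ^ 2
        + 4 * (1 - ρ ^ 2) * (b ^ 2 / c ^ 2 + r ^ 2 / (c ^ 2 * T ^ 2)) := by positivity
  have hsq := Real.sq_sqrt hS
  have hs0 := Real.sqrt_nonneg ((1 + 2 * ρ * b / c) ^ 2
        + 4 * (1 - ρ ^ 2) * (b ^ 2 / c ^ 2 + r ^ 2 / (c ^ 2 * T ^ 2)))
  have hp : pPlus b c T ρ r = (1 / (2 * (1 - ρ ^ 2))) * ((1 + 2 * ρ * b / c)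
    + Real.sqrt ((1 + 2 * ρ * b / c) ^ 2
        + 4 * (1 - ρ ^ 2) * (b ^ 2 / c ^ 2 + r ^ 2 / (c ^ 2 * T ^ 2)))) := rfl
  generalize pPlus b c T ρ r = p at *
  generalize Real.sqrt ((1 + 2 * ρ * b / c) ^ 2
        + 4 * (1 - ρ ^ 2) * (b ^ 2 / c ^ 2 + r ^ 2 / (c ^ 2 * T ^ 2))) = S at *
  refine ⟨by rw [hp]; positivity, ?_⟩
  have hS' : S = 2 * (1 - ρ ^ 2) * p - (1 + 2 * ρ * b / c) := by
    rw [hp]; field_simp; ring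
  rw [hS'] at hsq
  have key : (1 - ρ ^ 2) * p ^ 2 - (1 + 2 * ρ * b / c) * p
      - (b ^ 2 / c ^ 2 + r ^ 2 / (c ^ 2 * T ^ 2)) = 0 := by
    have : 4 * (1 - ρ ^ 2) * ((1 - ρ ^ 2) * p ^ 2 - (1 + 2 * ρ * b / c) * p
      - (b ^ 2 / c ^ 2 + r ^ 2 / (c ^ 2 * T ^ 2))) = 0 := by linarith
    rcases mul_eq_zero.1 this with h | h
    · nlinarith
    · exact h
  have e : c ^ 2 * ((1 - ρ ^ 2) * p ^ 2 - (1 + 2 * ρ * b / c) * p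
      - (b ^ 2 / c ^ 2 + r ^ 2 / (c ^ 2 * T ^ 2))) =
      c ^ 2 * (p * (p - 1)) - ((b + ρ * c * p) ^ 2 + (r / T) ^ 2) := by
    field_simp; ring
  rw [key] at e; linarith

/-- Pointwise square completion. -/
lemma energy_identity (c b ρ p s ω u v z : ℝ) (hc : 0 < c) (hs : s ^ 2 = 1 - ρ ^ 2)
    (hq : c ^ 2 * (p * (p - 1)) = (b + ρ * c * p) ^ 2 + ω ^ 2) :
    (1 / 2) * (u ^ 2 + v ^ 2) = p * (-(z ^ 2) / 2 + z * (s * u + ρ * v))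
      + (1 / 2) * (u - p * s * z) ^ 2
      + (1 / (2 * c ^ 2)) * ((b * z + c * v) ^ 2 - ω ^ 2 * z ^ 2
          - 2 * (b + ρ * c * p) * z * (b * z + c * v)) := by
  have hω : ω ^ 2 = c ^ 2 * (p * (p - 1)) - (b + ρ * c * p) ^ 2 := by linarith
  rw [hω]
  have : (u - p * s * z) ^ 2 = u ^ 2 - 2 * p * s * z * u + p ^ 2 * (1 - ρ ^ 2) * z ^ 2 := by
    rw [← hs]; ring
  rw [this]
  field_simp
  ring

lemma energy_lower (T c b ρ p s r δ : ℝ) (hT : 0 < T) (hc : 0 < c) (hs : s ^ 2 = 1 - ρ ^ 2)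
    (hq : c ^ 2 * (p * (p - 1)) = (b + ρ * c * p) ^ 2 + (r / T) ^ 2)
    (hr : 0 < r) (hδ : 0 < δ) (hrδ : r + δ < Real.pi)
    (u v y z : ℝ → ℝ)
    (hu : ContinuousOn u (Set.Icc 0 T)) (hv : ContinuousOn v (Set.Icc 0 T))
    (hy : ∀ t ∈ Set.Icc (0 : ℝ) T,
          HasDerivWithinAt y (-(z t ^ 2) / 2 + z t * (s * u t + ρ * v t)) (Set.Icc (0 : ℝ) T) t)
    (hz : ∀ t ∈ Set.Icc (0 : ℝ) T,
          HasDerivWithinAt z (b * z t + c * v t) (Set.Icc (0 : ℝ) T) t)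
    (hy0 : y 0 = 0) (hz0 : z 0 = 0) :
    p * y T + (1 / (2 * c ^ 2)) * ((r / T * (Real.cos (r + δ) / Real.sin (r + δ))
        - (b + ρ * c * p)) * z T ^ 2) ≤ (1 / 2) * ∫ t in (0 : ℝ)..T, (u t ^ 2 + v t ^ 2) := by
  set ω := r / T with hω
  have hω0 : 0 < ω := div_pos hr hT
  have hωT : ω * T = r := by rw [hω]; field_simp
  have hsin : ∀ t ∈ Set.Icc (0 : ℝ) T, 0 < Real.sin (ω * t + δ) := by
    intro t ht
    apply Real.sin_pos_of_pos_of_lt_pi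
    · nlinarith [mul_nonneg hω0.le ht.1]
    · nlinarith [mul_le_mul_of_nonneg_left ht.2 hω0.le]
  set φ : ℝ → ℝ := fun t => ω * (Real.cos (ω * t + δ) / Real.sin (ω * t + δ)) with hφ
  have hφd : ∀ t ∈ Set.Icc (0 : ℝ) T, HasDerivAt φ (-ω ^ 2 - φ t ^ 2) t := by
    intro t ht
    have hl : HasDerivAt (fun t => ω * t + δ) ω t := by
      simpa using ((hasDerivAt_id t).const_mul ω).add_const δ
    have := ((hl.cos).div (hl.sin) (hsin t ht).ne').const_mul ω
    refine this.congr_deriv ?_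
    have h0 := (hsin t ht).ne'
    simp only [hφ]
    field_simp
  set F : ℝ → ℝ := fun t => p * y t + (1 / (2 * c ^ 2)) * ((φ t - (b + ρ * c * p)) * z t ^ 2)
    with hF
  have hFd : ∀ t ∈ Set.Icc (0 : ℝ) T, HasDerivWithinAt F
      (p * (-(z t ^ 2) / 2 + z t * (s * u t + ρ * v t)) + (1 / (2 * c ^ 2)) *
        ((-ω ^ 2 - φ t ^ 2) * z t ^ 2 +
          (φ t - (b + ρ * c * p)) * (2 * z t * (b * z t + c * v t)))) (Set.Icc (0 : ℝ) T) t := by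
    intro t ht
    have h1 := ((hφd t ht).hasDerivWithinAt (s := Set.Icc (0 : ℝ) T)).sub_const (b + ρ * c * p)
    have h2 := (hz t ht).pow 2
    have := ((hy t ht).const_mul p).add ((h1.mul h2).const_mul (1 / (2 * c ^ 2)))
    refine this.congr_deriv ?_
    simp
  have hle : ∀ t ∈ Set.Icc (0 : ℝ) T,
      (p * (-(z t ^ 2) / 2 + z t * (s * u t + ρ * v t)) + (1 / (2 * c ^ 2)) *
        ((-ω ^ 2 - φ t ^ 2) * z t ^ 2 +
          (φ t - (b + ρ * c * p)) * (2 * z t * (b * z t + c * v t))))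
      ≤ (1 / 2) * (u t ^ 2 + v t ^ 2) := by
    intro t ht
    rw [energy_identity c b ρ p s ω (u t) (v t) (z t) hc hs hq]
    have h1 := sq_nonneg (u t - p * s * z t)
    have h2 : 0 ≤ (1 / (2 * c ^ 2)) * (b * z t + c * v t - φ t * z t) ^ 2 := by positivity
    linarith
  have hyc : ContinuousOn y (Set.Icc 0 T) := fun t ht => (hy t ht).continuousWithinAt
  have hzc : ContinuousOn z (Set.Icc 0 T) := fun t ht => (hz t ht).continuousWithinAt
  have hφc : ContinuousOn φ (Set.Icc 0 T) :=
    fun t ht => (hφd t ht).continuousAt.continuousWithinAt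
  have hFc : ContinuousOn F (Set.Icc 0 T) := fun t ht => (hFd t ht).continuousWithinAt
  have hi1 : IntervalIntegrable (fun t => p * (-(z t ^ 2) / 2 + z t * (s * u t + ρ * v t))
      + (1 / (2 * c ^ 2)) * ((-ω ^ 2 - φ t ^ 2) * z t ^ 2 +
          (φ t - (b + ρ * c * p)) * (2 * z t * (b * z t + c * v t)))) MeasureTheory.volume 0 T := by
    apply ContinuousOn.intervalIntegrable_of_Icc hT.le
    fun_prop
  have hi2 : IntervalIntegrable (fun t => (1 / 2) * (u t ^ 2 + v t ^ 2))
      MeasureTheory.volume 0 T := by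
    apply ContinuousOn.intervalIntegrable_of_Icc hT.le
    fun_prop
  have hint := intervalIntegral.integral_eq_sub_of_hasDerivAt_of_le hT.le hFc
    (fun t ht => (hFd t (Set.Ioo_subset_Icc_self ht)).hasDerivAt (Icc_mem_nhds ht.1 ht.2)) hi1
  have hmono := intervalIntegral.integral_mono_on hT.le hi1 hi2 hle
  rw [hint, intervalIntegral.integral_const_mul] at hmono
  simp only [hF, hφ, hy0, hz0, hωT] at hmono
  simpa using hmono



/-- The minimal energy `Λ(a)` of controls steering the small-noise correlated
Stein–Stein system from `(0,0)` to `y(T) = a` equals `p₁⁺·a`, and the infimum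
is attained (`IsLeast`). -/
theorem stein_stein_correlated_energy_value
    (T c b ρ a : ℝ) (hT : 0 < T) (hc : 0 < c) (hb : b ≤ 0)
    (hρ : ρ ∈ Set.Ioc (-1 : ℝ) 0) (ha : 0 < a)
    (r₁ : ℝ)
    (hr₁ : IsLeast
      {r : ℝ | r ∈ Set.Ico (Real.pi / 2) Real.pi ∧
        r * Real.cos r = (b + ρ * c * pPlus b c T ρ r) * T * Real.sin r} r₁) :
    IsLeast
      {E : ℝ | ∃ h₁ h₂ h₁d h₂d y z : ℝ → ℝ,
        ContinuousOn h₁d (Set.Icc (0 : ℝ) T) ∧ ContinuousOn h₂d (Set.Icc (0 : ℝ) T) ∧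
        (∀ t ∈ Set.Icc (0 : ℝ) T, HasDerivWithinAt h₁ (h₁d t) (Set.Icc (0 : ℝ) T) t) ∧
        (∀ t ∈ Set.Icc (0 : ℝ) T, HasDerivWithinAt h₂ (h₂d t) (Set.Icc (0 : ℝ) T) t) ∧
        h₁ 0 = 0 ∧ h₂ 0 = 0 ∧
        (∀ t ∈ Set.Icc (0 : ℝ) T,
          HasDerivWithinAt y
            (-(z t ^ 2) / 2 + z t * (Real.sqrt (1 - ρ ^ 2) * h₁d t + ρ * h₂d t))
            (Set.Icc (0 : ℝ) T) t) ∧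
        (∀ t ∈ Set.Icc (0 : ℝ) T,
          HasDerivWithinAt z (b * z t + c * h₂d t) (Set.Icc (0 : ℝ) T) t) ∧
        y 0 = 0 ∧ z 0 = 0 ∧ y T = a ∧
        E = (1 / 2) * ∫ t in (0 : ℝ)..T, (h₁d t ^ 2 + h₂d t ^ 2)}
      (pPlus b c T ρ r₁ * a) := by
  have hstat := hr₁.1
  obtain ⟨⟨hr1, hr2⟩, hreq⟩ := hstat
  obtain ⟨hp, hq⟩ := pPlus_quad T c b ρ r₁ hT hc hb hρ
  generalize pPlus b c T ρ r₁ = p at *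
  have hpi := Real.pi_pos
  have hr : 0 < r₁ := by linarith
  have hsin : 0 < Real.sin r₁ := Real.sin_pos_of_pos_of_lt_pi hr hr2
  have hs : Real.sqrt (1 - ρ ^ 2) ^ 2 = 1 - ρ ^ 2 :=
    Real.sq_sqrt (by nlinarith [hρ.1, hρ.2])
  generalize Real.sqrt (1 - ρ ^ 2) = s at *
  have hβ : r₁ / T * Real.cos r₁ = (b + ρ * c * p) * Real.sin r₁ := by
    field_simp; linarith
  constructor
  · set ω := r₁ / T with hω
    have hω0 : 0 < ω := div_pos hr hT
    have hωT : ω * T = r₁ := by rw [hω]; field_simp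
    set z : ℝ → ℝ := fun t => Real.sin (ω * t) with hz
    set u : ℝ → ℝ := fun t => p * s * z t with hu
    set v : ℝ → ℝ := fun t => (ω * Real.cos (ω * t) - b * z t) / c with hv
    have hzc : Continuous z := by fun_prop
    have huc : Continuous u := by fun_prop
    have hvc : Continuous v := by fun_prop
    have hl : ∀ t, HasDerivAt (fun t => ω * t) ω t := fun t => by
      simpa using (hasDerivAt_id t).const_mul ω
    have hzv : ∀ t, b * z t + c * v t = ω * Real.cos (ω * t) := by
      intro t; simp only [hv]; field_simp; ring
    have hzd : ∀ t, HasDerivAt z (b * z t + c * v t) t := fun t => by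
      rw [hzv, mul_comm]; exact (hl t).sin
    set g : ℝ → ℝ := fun t => -(z t ^ 2) / 2 + z t * (s * u t + ρ * v t) with hg
    have hgc : Continuous g := by fun_prop
    set y : ℝ → ℝ := fun t => ∫ x in (0 : ℝ)..t, g x with hy
    have hyd : ∀ t, HasDerivAt y (g t) t := fun t => hgc.integral_hasStrictDerivAt 0 t |>.hasDerivAt
    have hFd : ∀ t, HasDerivAt (fun t => p * y t + (1 / (2 * c ^ 2)) *
        (z t * (ω * Real.cos (ω * t)) - (b + ρ * c * p) * z t ^ 2))
        ((1 / 2) * (u t ^ 2 + v t ^ 2)) t := by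
      intro t
      have h1 := ((hzd t).mul ((hl t).cos.const_mul ω)).sub
        (((hzd t).pow 2).const_mul (b + ρ * c * p))
      have := ((hyd t).const_mul p).add (h1.const_mul (1 / (2 * c ^ 2)))
      refine this.congr_deriv ?_
      rw [energy_identity c b ρ p s ω (u t) (v t) (z t) hc hs hq]
      simp only [hzv, hg, hu]
      simp only [hz]
      push_cast
      ring
    have hE : (1 / 2) * ∫ t in (0 : ℝ)..T, (u t ^ 2 + v t ^ 2) = p * y T := by
      rw [← intervalIntegral.integral_const_mul,
        intervalIntegral.integral_eq_sub_of_hasDerivAt (fun t _ => hFd t)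
          (Continuous.intervalIntegrable (by fun_prop) _ _)]
      simp only [hz, hωT, hβ]
      simp [hy]
      right
      ring
    have hpos : 0 < ∫ t in (0 : ℝ)..T, (u t ^ 2 + v t ^ 2) := by
      apply intervalIntegral.integral_pos hT (by fun_prop) (fun t _ => by positivity)
      refine ⟨0, ⟨le_rfl, hT.le⟩, ?_⟩
      have : v 0 = ω / c := by simp [hv, hz]
      rw [this]
      positivity
    have hyT : 0 < y T := by
      by_contra h
      nlinarith [mul_nonneg hp.le (neg_nonneg.2 (not_lt.1 h))]
    obtain ⟨K, hK⟩ : ∃ K : ℝ, K ^ 2 = a / y T := ⟨_, Real.sq_sqrt (by positivity)⟩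
    refine ⟨fun t => ∫ x in (0 : ℝ)..t, K * u x, fun t => ∫ x in (0 : ℝ)..t, K * v x,
      fun t => K * u t, fun t => K * v t, fun t => K ^ 2 * y t, fun t => K * z t,
      by fun_prop, by fun_prop, ?_, ?_, by simp, by simp, ?_, ?_, by simp [hy], by simp [hz],
      ?_, ?_⟩
    · intro t _
      exact (Continuous.integral_hasStrictDerivAt (by fun_prop) 0 t).hasDerivAt.hasDerivWithinAt
    · intro t _
      exact (Continuous.integral_hasStrictDerivAt (by fun_prop) 0 t).hasDerivAt.hasDerivWithinAt
    · intro t _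
      refine (((hyd t).const_mul (K ^ 2)).congr_deriv ?_).hasDerivWithinAt
      simp only [hg]; ring
    · intro t _
      refine (((hzd t).const_mul K).congr_deriv ?_).hasDerivWithinAt
      ring
    · simp only [hK]; field_simp
    · have : ∀ t, (K * u t) ^ 2 + (K * v t) ^ 2 = K ^ 2 * (u t ^ 2 + v t ^ 2) := fun t => by ring
      simp only [this]
      rw [intervalIntegral.integral_const_mul, mul_left_comm, hE, hK]
      field_simp
  · rintro E ⟨h₁, h₂, u, v, y, z, hu, hv, -, -, -, -, hy, hz, hy0, hz0, hyT, rfl⟩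
    have hlim : Filter.Tendsto (fun δ => p * y T + (1 / (2 * c ^ 2)) *
        ((r₁ / T * (Real.cos (r₁ + δ) / Real.sin (r₁ + δ)) - (b + ρ * c * p)) * z T ^ 2))
        (nhdsWithin 0 (Set.Ioi 0)) (nhds (p * a)) := by
      have hca : ContinuousAt (fun δ => p * y T + (1 / (2 * c ^ 2)) *
        ((r₁ / T * (Real.cos (r₁ + δ) / Real.sin (r₁ + δ)) - (b + ρ * c * p)) * z T ^ 2)) 0 := by
        have : Real.sin (r₁ + 0) ≠ 0 := by simpa using hsin.ne'
        fun_prop (disch := assumption)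
      have h0 := hca.tendsto.mono_left (nhdsWithin_le_nhds (s := Set.Ioi 0))
      convert h0 using 2
      have : r₁ / T * (Real.cos r₁ / Real.sin r₁) = b + ρ * c * p := by
        rw [← mul_div_assoc, hβ]; field_simp
      simp [this, hyT]
    refine le_of_tendsto hlim ?_
    filter_upwards [Ioo_mem_nhdsGT (show (0 : ℝ) < Real.pi - r₁ by linarith)] with δ hδ
    exact energy_lower T c b ρ p s r₁ δ hT hc hs hq hr hδ.1 (by linarith [hδ.2]) u v y z hu hv
      hy hz hy0 hz0
end

section
/- Let c > 0 and b, ρ ∈ ℝ. On the open set U = {p ∈ ℝ : c²p(p − 1) − (b + ρcp)² > 0} define χ(p) = √(c²p(p − 1) − (b + ρcp)²). Then for every p ∈ U: p·χ(p)·χ'(p) = χ(p)² + c²p/2 + b·(b + ρcp). If in addition b ≤ 0, ρ ≤ 0 and p > 0, then p·χ'(p) > χ(p). -/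
/-- The frequency `χ(p) = √(c²p(p−1) − (b + ρcp)²)` of the correlated Stein–Stein
Hamiltonian flow. -/
noncomputable def chiFun (b c ρ : ℝ) : ℝ → ℝ :=
  fun p => Real.sqrt (c ^ 2 * p * (p - 1) - (b + ρ * c * p) ^ 2)

/-- On the region where `c²p(p−1) − (b + ρcp)² > 0` one has
`p·χ(p)·χ'(p) = χ(p)² + c²p/2 + b(b + ρcp)`; consequently, if `b ≤ 0`, `ρ ≤ 0`
and `p > 0` then `p·χ'(p) > χ(p)`. -/
theorem chi_derivative_identity (b c ρ : ℝ) (hc : 0 < c) :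
    ∀ p ∈ {p : ℝ | 0 < c ^ 2 * p * (p - 1) - (b + ρ * c * p) ^ 2},
      p * chiFun b c ρ p * deriv (chiFun b c ρ) p
          = (chiFun b c ρ p) ^ 2 + c ^ 2 * p / 2 + b * (b + ρ * c * p) ∧
      (b ≤ 0 → ρ ≤ 0 → 0 < p → chiFun b c ρ p < p * deriv (chiFun b c ρ) p) := by
  intro p hp
  have hp' : 0 < c ^ 2 * p * (p - 1) - (b + ρ * c * p) ^ 2 := hp
  have hs : 0 < chiFun b c ρ p := Real.sqrt_pos.mpr hp'
  have hsq : chiFun b c ρ p ^ 2 = c ^ 2 * p * (p - 1) - (b + ρ * c * p) ^ 2 :=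
    Real.sq_sqrt hp'.le
  have hf : HasDerivAt (fun p : ℝ => c ^ 2 * p * (p - 1) - (b + ρ * c * p) ^ 2)
      (c ^ 2 * (2 * p - 1) - 2 * (b + ρ * c * p) * (ρ * c)) p := by
    have h1 : HasDerivAt (fun p : ℝ => c ^ 2 * p) (c ^ 2) p := by
      simpa using (hasDerivAt_id p).const_mul (c ^ 2)
    have h2 : HasDerivAt (fun p : ℝ => p - 1) 1 p := (hasDerivAt_id p).sub_const 1
    have h3 : HasDerivAt (fun p : ℝ => b + ρ * c * p) (ρ * c) p := by
      simpa using ((hasDerivAt_id p).const_mul (ρ * c)).const_add b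
    refine ((h1.mul h2).sub (h3.pow 2)).congr_deriv ?_
    push_cast
    ring
  have hd : deriv (chiFun b c ρ) p
      = (c ^ 2 * (2 * p - 1) - 2 * (b + ρ * c * p) * (ρ * c)) / (2 * chiFun b c ρ p) :=
    (hf.sqrt hp'.ne').deriv
  have key : p * chiFun b c ρ p * deriv (chiFun b c ρ) p
      = (chiFun b c ρ p) ^ 2 + c ^ 2 * p / 2 + b * (b + ρ * c * p) := by
    rw [hsq, hd]
    field_simp
    ring
  refine ⟨key, fun hb hρ hp0 => ?_⟩
  have h1 : 0 < c ^ 2 * p / 2 := by positivity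
  have h2 : b + ρ * c * p ≤ 0 := by
    have : ρ * (c * p) ≤ 0 := mul_nonpos_of_nonpos_of_nonneg hρ (by positivity)
    linarith
  have h3 : 0 ≤ b * (b + ρ * c * p) := mul_nonneg_of_nonpos_of_nonpos hb h2
  refine lt_of_mul_lt_mul_left ?_ hs.le
  nlinarith
end

section
/- Let c > 0, b ≤ 0 and ρ ∈ (−1, 0]. Let p* > 1 be such that c²p*(p* − 1) − (b + ρcp*)² > 0, and define, on a neighbourhood of p* in {p : c²p(p − 1) − (b + ρcp)² > 0}, χ(p) = √(c²p(p − 1) − (b + ρcp)²) and G(p) = χ(p)·cos(χ(p)) − (b + ρcp)·sin(χ(p)). Assume χ(p*) ∈ [π/2, π) and G(p*) = 0. Then G'(p*) < 0. -/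
/-- The transversality function `G(p) = χ(p)cos(χ(p)) − (b + ρcp)sin(χ(p))`. -/
noncomputable def GFun (b c ρ : ℝ) : ℝ → ℝ :=
  fun p => chiFun b c ρ p * Real.cos (chiFun b c ρ p)
    - (b + ρ * c * p) * Real.sin (chiFun b c ρ p)

/-- Non-focality estimate for the correlated Stein–Stein model (with `T = 1`):
at a momentum `p* > 1` with `χ(p*) ∈ [π/2, π)` satisfying the transversality
relation `G(p*) = 0`, one has `G'(p*) < 0`. -/
theorem transversality_derivative_negative
    (b c ρ pstar : ℝ) (hc : 0 < c) (hb : b ≤ 0) (hρ : ρ ∈ Set.Ioc (-1 : ℝ) 0)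
    (hp : 1 < pstar)
    (hpos : 0 < c ^ 2 * pstar * (pstar - 1) - (b + ρ * c * pstar) ^ 2)
    (hχ : chiFun b c ρ pstar ∈ Set.Ico (Real.pi / 2) Real.pi)
    (hG : GFun b c ρ pstar = 0) :
    deriv (GFun b c ρ) pstar < 0 := by
  obtain ⟨hρ1, hρ2⟩ := hρ
  obtain ⟨hx1, hx2⟩ := hχ
  have hxpos : 0 < chiFun b c ρ pstar := by
    unfold chiFun; exact Real.sqrt_pos.mpr hpos
  have hsq : chiFun b c ρ pstar ^ 2
      = c ^ 2 * pstar * (pstar - 1) - (b + ρ * c * pstar) ^ 2 := by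
    unfold chiFun; exact Real.sq_sqrt hpos.le
  have hsin : 0 < Real.sin (chiFun b c ρ pstar) := Real.sin_pos_of_pos_of_lt_pi hxpos hx2
  have hβ : HasDerivAt (fun p : ℝ => b + ρ * c * p) (ρ * c) pstar := by
    simpa using ((hasDerivAt_id pstar).const_mul (ρ * c)).const_add b
  have hin : HasDerivAt (fun p : ℝ => c ^ 2 * p * (p - 1) - (b + ρ * c * p) ^ 2)
      (c ^ 2 * (2 * pstar - 1) - 2 * (b + ρ * c * pstar) * (ρ * c)) pstar := by
    have h1 := (((hasDerivAt_id pstar).const_mul (c ^ 2)).mul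
      ((hasDerivAt_id pstar).sub_const 1)).sub (hβ.pow 2)
    refine h1.congr_deriv ?_
    simp
    ring
  have hchi : HasDerivAt (chiFun b c ρ)
      ((c ^ 2 * (2 * pstar - 1) - 2 * (b + ρ * c * pstar) * (ρ * c))
        / (2 * chiFun b c ρ pstar)) pstar := hin.sqrt hpos.ne'
  have hGd : HasDerivAt (GFun b c ρ) _ pstar :=
    (hchi.mul hchi.cos).sub (hβ.mul hchi.sin)
  rw [hGd.deriv]
  unfold GFun at hG
  generalize chiFun b c ρ pstar = x at *
  generalize hs : Real.sin x = s at *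
  generalize hk : Real.cos x = k at *
  have hk' : k = (b + ρ * c * pstar) * s / x := by
    field_simp; linarith
  have hBp : -(ρ * c) * pstar ≤ -(b + ρ * c * pstar) := by linarith
  have hA : 0 ≤ -(ρ * c) := by nlinarith
  generalize b + ρ * c * pstar = β at *
  generalize ρ * c = a at *
  have hB : 0 ≤ -β := le_trans (mul_nonneg hA (by linarith)) hBp
  have hc2 : 0 < c ^ 2 := by positivity
  have key : 0 < (c ^ 2 * (2 * pstar - 1) - 2 * β * a) * (x ^ 2 + β ^ 2 - β)
      + 2 * a * x ^ 2 := by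
    have e1 : (-a * pstar) * (c ^ 2 * (pstar - 1) * (1 - β))
        ≤ -β * (c ^ 2 * (pstar - 1) * (1 - β)) :=
      mul_le_mul_of_nonneg_right hBp
        (mul_nonneg (mul_nonneg hc2.le (by linarith)) (by linarith))
    have e2 : 0 < c ^ 2 * (pstar - 1) * x ^ 2 :=
      mul_pos (mul_pos hc2 (by linarith)) (by positivity)
    have e3 : 0 < c ^ 2 * (x ^ 2 + β ^ 2 - β) :=
      mul_pos hc2 (by nlinarith [sq_nonneg β, pow_pos hxpos 2])
    have e4 : (c ^ 2 * (2 * pstar - 1) - 2 * β * a) * (x ^ 2 + β ^ 2 - β) + 2 * a * x ^ 2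
      = 2 * (-β * (c ^ 2 * (pstar - 1) * (1 - β)) - (-a * pstar) * (c ^ 2 * (pstar - 1) * (1 - β)))
        + 2 * (c ^ 2 * (pstar - 1) * x ^ 2) + c ^ 2 * (x ^ 2 + β ^ 2 - β) := by
      linear_combination (2 * a - 2 * a * β) * hsq
    rw [e4]; linarith
  have hfin : 0 < s / (2 * x ^ 2) * ((c ^ 2 * (2 * pstar - 1) - 2 * β * a)
      * (x ^ 2 + β ^ 2 - β) + 2 * a * x ^ 2) := mul_pos (by positivity) key
  refine lt_of_eq_of_lt ?_ (neg_lt_zero.mpr hfin)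
  rw [hk']
  field_simp
  ring
end

section
/- Let T > 0, c > 0, b ≤ 0, ρ ∈ (−1, 0], let σ₀, a₀, q₀ be real numbers, let p > 1, set b̃ = b + ρcp, and let χ > 0 satisfy χ² + b̃² = c²·p(p − 1), χ·cos(χT) = b̃·sin(χT), and 0 < χT < π. Let Ẑ : [0,T] → ℝ solve Ẑ'(t) = b·Ẑ(t) + a₀ with Ẑ(0) = σ₀, and set z(t) = (q₀c²/χ)·sin(χt) and q(t) = q₀·(cos(χt) − (b̃/χ)·sin(χt)). Then p·[(p − 1)·∫₀ᵀ z(t)·Ẑ(t) dt + ρc·∫₀ᵀ q(t)·Ẑ(t) dt] = q₀·(σ₀ + a₀·tan(χT/2)/χ). -/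
/-- Closed form for the second-order constant in the correlated Stein–Stein model:
`p[(p−1)∫₀ᵀ zẐ + ρc∫₀ᵀ qẐ] = q₀(σ₀ + a₀·tan(χT/2)/χ)`, where `b̃ = b + ρcp`,
`z(t) = (q₀c²/χ)sin(χt)`, `q(t) = q₀(cos(χt) − (b̃/χ)sin(χt))` and `Ẑ' = bẐ + a₀`,
`Ẑ(0) = σ₀`. -/
theorem stein_stein_correlated_c2_formula
    (T c b ρ σ₀ a₀ q₀ p χ : ℝ) (hT : 0 < T) (hc : 0 < c) (hb : b ≤ 0)
    (hρ : ρ ∈ Set.Ioc (-1 : ℝ) 0) (hp : 1 < p) (hχ : 0 < χ)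
    (hχ2 : χ ^ 2 + (b + ρ * c * p) ^ 2 = c ^ 2 * p * (p - 1))
    (htrans : χ * Real.cos (χ * T) = (b + ρ * c * p) * Real.sin (χ * T))
    (hχT0 : 0 < χ * T) (hχT : χ * T < Real.pi)
    (Z : ℝ → ℝ)
    (hZ : ∀ t ∈ Set.Icc (0 : ℝ) T,
      HasDerivWithinAt Z (b * Z t + a₀) (Set.Icc (0 : ℝ) T) t)
    (hZ0 : Z 0 = σ₀) :
    p * ((p - 1) * (∫ t in (0 : ℝ)..T, (q₀ * c ^ 2 / χ * Real.sin (χ * t) * Z t))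
        + ρ * c * (∫ t in (0 : ℝ)..T,
            (q₀ * (Real.cos (χ * t) - (b + ρ * c * p) / χ * Real.sin (χ * t)) * Z t)))
      = q₀ * (σ₀ + a₀ * Real.tan (χ * T / 2) / χ) := by
  set B : ℝ := b + ρ * c * p with hB
  have hχ0 : χ ≠ 0 := hχ.ne'
  have hZc : ContinuousOn Z (Set.Icc 0 T) := fun t ht => (hZ t ht).continuousWithinAt
  have huI : Set.uIcc (0 : ℝ) T = Set.Icc 0 T := Set.uIcc_of_le hT.le
  have hi1 : IntervalIntegrable (fun t => q₀ * c ^ 2 / χ * Real.sin (χ * t) * Z t)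
      MeasureTheory.volume 0 T := by
    apply ContinuousOn.intervalIntegrable
    rw [huI]
    exact ContinuousOn.mul (by fun_prop) hZc
  have hi2 : IntervalIntegrable
      (fun t => q₀ * (Real.cos (χ * t) - B / χ * Real.sin (χ * t)) * Z t)
      MeasureTheory.volume 0 T := by
    apply ContinuousOn.intervalIntegrable
    rw [huI]
    exact ContinuousOn.mul (by fun_prop) hZc
  have hsum := (hi1.const_mul (p * (p - 1))).add (hi2.const_mul (p * (ρ * c)))
  have hs : ∀ t : ℝ, HasDerivAt (fun t => Real.sin (χ * t)) (Real.cos (χ * t) * χ) t := by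
    intro t
    have h := ((hasDerivAt_id t).const_mul χ).sin
    simpa using h
  have hco : ∀ t : ℝ, HasDerivAt (fun t => Real.cos (χ * t)) (-Real.sin (χ * t) * χ) t := by
    intro t
    have h := ((hasDerivAt_id t).const_mul χ).cos
    simpa using h
  have key := intervalIntegral.integral_eq_sub_of_hasDerivAt_of_le hT.le
    (f := fun t => a₀ * q₀ * (Real.sin (χ * t) / χ + B / χ ^ 2 * Real.cos (χ * t))
      - q₀ * (Real.cos (χ * t) - B / χ * Real.sin (χ * t)) * Z t)
    (f' := fun t => p * (p - 1) * (q₀ * c ^ 2 / χ * Real.sin (χ * t) * Z t)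
      + p * (ρ * c) * (q₀ * (Real.cos (χ * t) - B / χ * Real.sin (χ * t)) * Z t))
    (ContinuousOn.sub (by fun_prop) (ContinuousOn.mul (by fun_prop) hZc))
    (by
      intro t ht
      have hz : HasDerivAt Z (b * Z t + a₀) t :=
        (hZ t (Set.Ioo_subset_Icc_self ht)).hasDerivAt (Icc_mem_nhds ht.1 ht.2)
      have h1 := ((((hs t).div_const χ).add ((hco t).const_mul (B / χ ^ 2))).const_mul
        (a₀ * q₀)).sub ((((hco t).sub ((hs t).const_mul (B / χ))).const_mul q₀).mul hz)
      refine h1.congr_deriv ?_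
      have hr : p * (ρ * c) = B - b := by rw [hB]; ring
      have hc2 : p * (p - 1) * (q₀ * c ^ 2 / χ * Real.sin (χ * t) * Z t)
          = (χ ^ 2 + B ^ 2) * (q₀ / χ * Real.sin (χ * t) * Z t) := by
        rw [hχ2]; ring
      rw [hr, hc2]
      simp only [Pi.sub_apply]
      field_simp
      ring)
    hsum
  rw [intervalIntegral.integral_add (hi1.const_mul _) (hi2.const_mul _),
    intervalIntegral.integral_const_mul, intervalIntegral.integral_const_mul] at key
  have hsp : 0 < Real.sin (χ * T) := Real.sin_pos_of_pos_of_lt_pi hχT0 hχT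
  have hBv : B = χ * Real.cos (χ * T) / Real.sin (χ * T) := by
    field_simp; linarith
  have hq : Real.cos (χ * T) - B / χ * Real.sin (χ * T) = 0 := by
    rw [hBv]; field_simp; ring
  have hch : 0 < Real.cos (χ * T / 2) :=
    Real.cos_pos_of_mem_Ioo ⟨by linarith, by linarith⟩
  have htan : Real.tan (χ * T / 2) = (1 - Real.cos (χ * T)) / Real.sin (χ * T) := by
    have e1 : Real.sin (χ * T) = 2 * Real.sin (χ * T / 2) * Real.cos (χ * T / 2) := by
      rw [← Real.sin_two_mul]; congr 1; ring
    have e2 : Real.cos (χ * T) = 1 - 2 * Real.sin (χ * T / 2) ^ 2 := by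
      have h := Real.cos_two_mul (χ * T / 2)
      rw [show 2 * (χ * T / 2) = χ * T by ring] at h
      linarith [Real.sin_sq_add_cos_sq (χ * T / 2)]
    rw [Real.tan_eq_sin_div_cos, div_eq_div_iff hch.ne' hsp.ne', e1, e2]
    ring
  have hfin : Real.sin (χ * T) / χ + B / χ ^ 2 * Real.cos (χ * T) - B / χ ^ 2
      = Real.tan (χ * T / 2) / χ := by
    rw [htan, hBv]
    field_simp
    linarith [Real.sin_sq_add_cos_sq (χ * T)]
  simp only [hq, mul_zero, Real.sin_zero, Real.cos_zero, hZ0] at key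
  linear_combination key + q₀ * a₀ * hfin
end
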